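/- arXiv:2505.08935 — 12 statements merged into one kernel-verified Lean document; each statement's English description precedes it below -/
import Mathlib

section
/- Let p ≥ 3 be a prime number and r a rational number with ν_p(r) ≥ 1. Then for every even integer n ≥ 0, ν_p(P_n(r)) = ν_p(C(n, n/2)), where C(n,k) denotes the binomial coefficient. -/
/-!
Write `n = 2m` and index the summands by `j = m - k`. Since
`C(2m, m-j) C(2m+2j, 2m) = (2m+2j)! / ((m-j)! (m+j)! (2j)!)` and
`(2m+2j)! / (2m)! = 2^j (2m+1)(2m+3)⋯(2m+2j-1) · (m+j)! / m!`, the coefficient of `x^(2j)` equals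
`C(2m, m) · N_j / (2j)!` with `N_j` a natural number (`exists_coeff_factor`). As `ν_p((2j)!) < 2j`
for `j ≥ 1`, each `N_j r^(2j) / (2j)!` with `j ≥ 1` has positive valuation
(`padicNorm_pow_div_factorial_lt_one`). Hence `P_n(r)` is `C(n, n/2)` times a `p`-adic unit, the
factor `1/2^n` being a unit because `p` is odd.
-/

/-- The Legendre polynomial `P_n` evaluated at a rational `x`, via the Rodrigues-type formula
`P_n(x) = (1/2^n) * ∑_{k=0}^{⌊n/2⌋} (-1)^k C(n,k) C(2n-2k, n) x^(n-2k)`. -/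
def legendreP (n : ℕ) (x : ℚ) : ℚ :=
  (1 / 2 ^ n) * ∑ k ∈ Finset.range (n / 2 + 1),
    (-1 : ℚ) ^ k * (n.choose k : ℚ) * (((2 * n - 2 * k).choose n : ℕ) : ℚ) * x ^ (n - 2 * k)

/-- The quotient `D` is `2^j (2m+1)(2m+3)⋯(2m+2j-1)`. -/
lemma exists_factorial_ratio (m j : ℕ) :
    ∃ D : ℕ, (2 * m + 2 * j).factorial * m.factorial
      = (2 * m).factorial * (m + j).factorial * D := by
  induction j with
  | zero => exact ⟨1, by simp⟩
  | succ j ih =>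
    obtain ⟨D, hD⟩ := ih
    refine ⟨D * (2 * (2 * m + 2 * j + 1)), ?_⟩
    have h1 : (2 * m + 2 * (j + 1)).factorial
        = (2 * m + 2 * j + 2) * ((2 * m + 2 * j + 1) * (2 * m + 2 * j).factorial) := by
      rw [← Nat.factorial_succ, ← Nat.factorial_succ]; rfl
    have h2 : (m + (j + 1)).factorial = (m + j + 1) * (m + j).factorial := by
      rw [← Nat.factorial_succ]; rfl
    rw [h1, h2]
    linear_combination (2 * m + 2 * j + 2) * (2 * m + 2 * j + 1) * hD

/-- After multiplication by `(2j)!`, the coefficient of `x^(2j)` in `2^(2m) P_{2m}` is, up to sign,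
a multiple of the central binomial coefficient. -/
lemma exists_coeff_factor (m j : ℕ) (hj : j ≤ m) :
    ∃ N : ℕ, (2 * m).choose (m - j) * (2 * m + 2 * j).choose (2 * m) * (2 * j).factorial
      = (2 * m).choose m * N := by
  obtain ⟨D, hD⟩ := exists_factorial_ratio m j
  obtain ⟨E, hE⟩ := Nat.factorial_dvd_factorial (Nat.sub_le m j)
  refine ⟨D * E, ?_⟩
  have hA := Nat.choose_mul_factorial_mul_factorial (n := 2 * m) (k := m - j) (by omega)
  have hB := Nat.choose_mul_factorial_mul_factorial (n := 2 * m + 2 * j) (k := 2 * m) (by omega)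
  have hC := Nat.choose_mul_factorial_mul_factorial (n := 2 * m) (k := m) (by omega)
  rw [show 2 * m - (m - j) = m + j by omega] at hA
  rw [show 2 * m + 2 * j - 2 * m = 2 * j by omega] at hB
  rw [show 2 * m - m = m by omega] at hC
  have hpos : 0 < (m - j).factorial * (m + j).factorial * m.factorial * m.factorial := by
    positivity
  apply Nat.eq_of_mul_eq_mul_right hpos
  generalize (2 * m).choose (m - j) = a at *
  generalize (2 * m + 2 * j).choose (2 * m) = b at *
  generalize (2 * m).choose m = c at *
  calc a * b * (2 * j).factorial
        * ((m - j).factorial * (m + j).factorial * m.factorial * m.factorial)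
      = (a * (m - j).factorial * (m + j).factorial) * (b * (2 * j).factorial)
          * m.factorial * m.factorial := by ring
    _ = (b * (2 * m).factorial * (2 * j).factorial) * m.factorial * m.factorial := by
        rw [hA]; ring
    _ = ((2 * m).factorial * (m + j).factorial * D) * m.factorial := by rw [hB, hD]
    _ = (c * m.factorial * m.factorial) * (m + j).factorial * D
          * ((m - j).factorial * E) := by rw [hC, ← hE]
    _ = _ := by ring

lemma padicNorm_pow_div_factorial_lt_one (p : ℕ) [Fact p.Prime] (r : ℚ)
    (hr : 1 ≤ padicValRat p r) (i : ℕ) (hi : 0 < i) :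
    padicNorm p (r ^ i / (i.factorial : ℚ)) < 1 := by
  -- `padicValRat p 0 = 0`, so `hr` excludes `r = 0`.
  have hr0 : r ≠ 0 := by rintro rfl; simp at hr
  have hf : (i.factorial : ℚ) ≠ 0 := by exact_mod_cast i.factorial_ne_zero
  have hp1 : 1 < p := (Fact.out : p.Prime).one_lt
  have hlt : padicValNat p i.factorial < i := by
    have h := sub_one_mul_padicValNat_factorial_lt_of_ne_zero p hi.ne'
    have : 1 * padicValNat p i.factorial ≤ (p - 1) * padicValNat p i.factorial :=
      Nat.mul_le_mul_right _ (by omega)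
    omega
  rw [padicNorm.eq_zpow_of_nonzero (div_ne_zero (pow_ne_zero _ hr0) hf),
    padicValRat.div (pow_ne_zero _ hr0) hf, padicValRat.pow, padicValRat.of_nat]
  apply zpow_lt_one_of_neg₀ (by exact_mod_cast hp1)
  have : (i : ℤ) * 1 ≤ i * padicValRat p r := mul_le_mul_of_nonneg_left hr (by positivity)
  have : (padicValNat p i.factorial : ℤ) < i := by exact_mod_cast hlt
  omega

theorem stmt0 (p : ℕ) (hp : p.Prime) (hp3 : 3 ≤ p) (r : ℚ) (hr : 1 ≤ padicValRat p r)
    (n : ℕ) (hn : Even n) :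
    padicValRat p (legendreP n r) = padicValNat p (n.choose (n / 2)) := by
  have : Fact p.Prime := ⟨hp⟩
  obtain ⟨m, rfl⟩ := hn
  rw [← two_mul, Nat.mul_div_cancel_left m two_pos]
  have hN : ∀ j : ℕ, ∃ N : ℕ, j ≤ m →
      (2 * m).choose (m - j) * (2 * m + 2 * j).choose (2 * m) * (2 * j).factorial
        = (2 * m).choose m * N := by
    intro j
    by_cases h : j ≤ m
    · obtain ⟨N, h'⟩ := exists_coeff_factor m j h
      exact ⟨N, fun _ => h'⟩
    · exact ⟨0, fun h' => absurd h' h⟩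
  choose N hN using hN
  set s : ℚ := ∑ k ∈ Finset.range m,
    ((-1 : ℚ) ^ k * (N (m - k) : ℚ)) * (r ^ (2 * (m - k)) / ((2 * (m - k)).factorial : ℚ)) with hs
  have hsum : legendreP (2 * m) r = ((2 * m).choose m : ℚ) / 2 ^ (2 * m) * (s + (-1) ^ m) := by
    unfold legendreP
    rw [Nat.mul_div_cancel_left m two_pos, Finset.sum_range_succ,
      show 2 * (2 * m) - 2 * m = 2 * m by omega, Nat.choose_self, Nat.sub_self]
    have hterm : ∑ k ∈ Finset.range m, (-1 : ℚ) ^ k * ((2 * m).choose k : ℚ)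
        * (((2 * (2 * m) - 2 * k).choose (2 * m) : ℕ) : ℚ) * r ^ (2 * m - 2 * k)
        = ((2 * m).choose m : ℚ) * s := by
      rw [hs, Finset.mul_sum]
      refine Finset.sum_congr rfl fun k hk => ?_
      have hk := Finset.mem_range.mp hk
      have h := hN (m - k) (Nat.sub_le m k)
      rw [show m - (m - k) = k by omega,
        show 2 * m + 2 * (m - k) = 2 * (2 * m) - 2 * k by omega] at h
      have h : ((2 * m).choose k : ℚ) * ((2 * (2 * m) - 2 * k).choose (2 * m) : ℕ)
          * ((2 * (m - k)).factorial : ℕ) = (2 * m).choose m * N (m - k) := by exact_mod_cast h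
      rw [show 2 * m - 2 * k = 2 * (m - k) by omega]
      have hf : ((2 * (m - k)).factorial : ℚ) ≠ 0 := by exact_mod_cast Nat.factorial_ne_zero _
      field_simp
      linear_combination r ^ (2 * (m - k)) * h
    rw [hterm]
    push_cast
    ring
  have hs1 : padicNorm p s < 1 := by
    rw [hs]
    refine padicNorm.sum_lt' (fun k hk => ?_) one_pos
    have hk := Finset.mem_range.mp hk
    have h1 := padicNorm_pow_div_factorial_lt_one p r hr (2 * (m - k)) (by omega)
    have h2 : padicNorm p ((-1 : ℚ) ^ k * (N (m - k) : ℚ)) ≤ 1 := by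
      have := padicNorm.of_int (p := p) ((-1 : ℤ) ^ k * (N (m - k) : ℤ))
      push_cast at this
      exact this
    rw [padicNorm.mul]
    exact (mul_le_of_le_one_left (padicNorm.nonneg _) h2).trans_lt h1
  have hm1 : padicNorm p ((-1 : ℚ) ^ m) = 1 := by
    rcases neg_one_pow_eq_or ℚ m with h | h <;> rw [h] <;> simp
  have hu : padicNorm p (s + (-1) ^ m) = 1 := by
    rw [padicNorm.add_eq_max_of_ne (by rw [hm1]; exact hs1.ne), hm1, max_eq_right hs1.le]
  have hu0 : s + (-1) ^ m ≠ 0 := by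
    intro h; rw [h] at hu; simp at hu
  have hv : padicValRat p (s + (-1) ^ m) = 0 := by
    rw [padicNorm.eq_zpow_of_nonzero hu0] at hu
    have hp1 : (1 : ℚ) < p := by exact_mod_cast hp.one_lt
    have := (zpow_eq_one_iff_right₀ (by linarith) hp1.ne').mp hu
    omega
  have h2 : padicValRat p (2 : ℚ) = 0 := by
    have : padicValNat p 2 = 0 :=
      padicValNat.eq_zero_of_not_dvd fun h => by have := Nat.le_of_dvd two_pos h; omega
    have h' := padicValRat.of_nat (p := p) (n := 2)
    rw [this] at h'
    exact_mod_cast h'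
  have hc : ((2 * m).choose m : ℚ) ≠ 0 := by
    exact_mod_cast (Nat.choose_pos (by omega : m ≤ 2 * m)).ne'
  have h20 : (2 : ℚ) ^ (2 * m) ≠ 0 := by positivity
  rw [hsum, padicValRat.mul (div_ne_zero hc h20) hu0, padicValRat.div hc h20,
    padicValRat.pow, h2, hv, padicValRat.of_nat]
  simp
end

section
/- Let p ≥ 3 be a prime number and r a rational number with ν_p(r) ≥ 1. Then for every odd integer n ≥ 1, ν_p(P_n(r)) = ν_p(C(n−1, (n−1)/2)) + ν_p(r) + ν_p(n), where C(n,k) denotes the binomial coefficient. -/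
/-- The absolute value of the coefficient of `x ^ (2j+1)` in `2 ^ (2m+1) * P_{2m+1}(x)`,
for `j ≤ m`. -/
def oddCoeff (m j : ℕ) : ℕ := (2 * m + 1).choose (m - j) * (2 * m + 2 * j + 2).choose (2 * m + 1)

/-- With `m = a + j`, this is the factorial form `(2m+2j+2)! / ((m-j)! (m+j+1)! (2j+1)!)` of the
coefficient. -/
lemma oddCoeff_mul_factorial (a j : ℕ) :
    oddCoeff (a + j) j * ((a.factorial * (a + 2 * j + 1).factorial) * (2 * j + 1).factorial)
      = (2 * a + 4 * j + 2).factorial := by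
  have h1 := Nat.add_choose_mul_factorial_mul_factorial (a + 2 * j + 1) a
  have h2 := Nat.add_choose_mul_factorial_mul_factorial (2 * j + 1) (2 * (a + j) + 1)
  have e1 : a + 2 * j + 1 + a = 2 * (a + j) + 1 := by ring
  have e2 : 2 * j + 1 + (2 * (a + j) + 1) = 2 * a + 4 * j + 2 := by ring
  have e3 : 2 * (a + j) + 2 * j + 2 = 2 * a + 4 * j + 2 := by ring
  rw [e1] at h1
  rw [e2] at h2
  rw [oddCoeff, e3, Nat.add_sub_cancel, ← h2, ← h1]
  ring

lemma oddCoeff_zero (m : ℕ) : oddCoeff m 0 = 2 * ((2 * m + 1) * (2 * m).choose m) := by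
  have h := oddCoeff_mul_factorial m 0
  have h1 := Nat.add_choose_mul_factorial_mul_factorial m m
  rw [← two_mul] at h1
  simp only [mul_zero, add_zero, zero_add, Nat.factorial_one, mul_one] at h
  rw [show (2 * m + 2).factorial = (2 * m + 2) * ((2 * m + 1) * (2 * m).factorial) by
    rw [Nat.factorial_succ, Nat.factorial_succ], ← h1, Nat.factorial_succ m] at h
  have hpos : 0 < m.factorial * ((m + 1) * m.factorial) := by positivity
  apply Nat.eq_of_mul_eq_mul_right hpos
  rw [h]
  ring

lemma oddCoeff_succ (a j : ℕ) :
    oddCoeff (a + 1 + j) (j + 1) * (2 * (j + 1) + 1).factorial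
      = oddCoeff (a + 1 + j) j * (2 * j + 1).factorial * (2 * (2 * a + 4 * j + 5) * (a + 1)) := by
  have h0 := oddCoeff_mul_factorial (a + 1) j
  have h1 := oddCoeff_mul_factorial a (j + 1)
  rw [show a + (j + 1) = a + 1 + j by ring] at h1
  rw [show a + 2 * (j + 1) + 1 = (a + 1 + 2 * j + 1) + 1 by ring,
    Nat.factorial_succ (a + 1 + 2 * j + 1),
    show 2 * a + 4 * (j + 1) + 2 = (2 * (a + 1) + 4 * j + 2) + 1 + 1 by ring,
    Nat.factorial_succ (2 * (a + 1) + 4 * j + 2 + 1), Nat.factorial_succ (2 * (a + 1) + 4 * j + 2),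
    ← h0, Nat.factorial_succ a] at h1
  have hpos : 0 < a.factorial * ((a + 1 + 2 * j + 1 + 1) * (a + 1 + 2 * j + 1).factorial) := by
    positivity
  apply Nat.eq_of_mul_eq_mul_right hpos
  linear_combination h1

lemma oddCoeff_zero_dvd (m j : ℕ) (hj : j ≤ m) :
    oddCoeff m 0 ∣ oddCoeff m j * (2 * j + 1).factorial := by
  induction j with
  | zero => simp
  | succ j ih =>
    obtain ⟨a, rfl⟩ : ∃ a, m = a + 1 + j := ⟨m - (j + 1), by omega⟩
    rw [oddCoeff_succ]
    exact Dvd.dvd.mul_right (ih (by omega)) _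

lemma padicValNat_odd_factorial_le (p : ℕ) [Fact p.Prime] (hp3 : 3 ≤ p) (j : ℕ) :
    padicValNat p (2 * j + 1).factorial ≤ j := by
  have h := sub_one_mul_padicValNat_factorial (p := p) (2 * j + 1)
  have h2 : 2 * padicValNat p (2 * j + 1).factorial
      ≤ (p - 1) * padicValNat p (2 * j + 1).factorial := Nat.mul_le_mul_right _ (by omega)
  omega

/-- Each term with `j ≥ 1` is `p`-adically smaller than the term with `j = 0`. -/
lemma padicNorm_term_lt (p : ℕ) [Fact p.Prime] (hp3 : 3 ≤ p) (r : ℚ) (hr : 1 ≤ padicValRat p r)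
    (m j : ℕ) (hj : j ≤ m) (hj1 : 1 ≤ j) :
    padicNorm p (oddCoeff m j * r ^ (2 * j + 1)) < padicNorm p (oddCoeff m 0 * r) := by
  have hr0 : r ≠ 0 := by rintro rfl; simp at hr
  have hc0 : (oddCoeff m 0 : ℚ) ≠ 0 := by
    rw [oddCoeff_zero]
    have := Nat.choose_pos (show m ≤ 2 * m by omega)
    positivity
  obtain ⟨a, ha⟩ := oddCoeff_zero_dvd m j hj
  have hf : ((2 * j + 1).factorial : ℚ) ≠ 0 := by positivity
  have ha' : (oddCoeff m j : ℚ) * (2 * j + 1).factorial = oddCoeff m 0 * a := by exact_mod_cast ha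
  have e : (oddCoeff m j : ℚ) * r ^ (2 * j + 1)
      = (oddCoeff m 0 * r) * ((a : ℚ) * (r ^ (2 * j) / (2 * j + 1).factorial)) := by
    field_simp
    linear_combination r ^ (2 * j + 1) * ha'
  have hpos : 0 < padicNorm p (oddCoeff m 0 * r) :=
    lt_of_le_of_ne (padicNorm.nonneg _) (padicNorm.nonzero (mul_ne_zero hc0 hr0)).symm
  have hlt : padicNorm p (r ^ (2 * j) / (2 * j + 1).factorial) < 1 := by
    rw [padicNorm.eq_zpow_of_nonzero (by positivity), padicValRat.div (by positivity) hf,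
      padicValRat.pow, padicValRat.of_nat]
    have h1 := padicValNat_odd_factorial_le p hp3 j
    have h2 : (2 * j : ℕ) * 1 ≤ ((2 * j : ℕ) : ℤ) * padicValRat p r :=
      mul_le_mul_of_nonneg_left hr (by positivity)
    apply zpow_lt_one_of_neg₀ (by exact_mod_cast (by omega : 1 < p))
    push_cast at h2
    rw [Nat.cast_mul, Nat.cast_ofNat]
    omega
  rw [e, padicNorm.mul]
  apply mul_lt_of_lt_one_right hpos
  rw [padicNorm.mul]
  exact mul_lt_one_of_nonneg_of_lt_one_right (padicNorm.of_nat a) (padicNorm.nonneg _) hlt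

theorem stmt1 (p : ℕ) (hp : p.Prime) (hp3 : 3 ≤ p) (r : ℚ) (hr : 1 ≤ padicValRat p r)
    (n : ℕ) (hn : Odd n) :
    padicValRat p (legendreP n r)
      = padicValNat p ((n - 1).choose ((n - 1) / 2)) + padicValRat p r + padicValNat p n := by
  have : Fact p.Prime := ⟨hp⟩
  -- `padicValRat p 0 = 0`, so the hypothesis on the valuation excludes `r = 0`.
  have hr0 : r ≠ 0 := by rintro rfl; simp at hr
  obtain ⟨m, rfl⟩ := hn
  have hch : (2 * m).choose m ≠ 0 := (Nat.choose_pos (by omega)).ne'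
  have hc0 : (oddCoeff m 0 : ℚ) * r ≠ 0 := by
    refine mul_ne_zero ?_ hr0
    rw [oddCoeff_zero]
    positivity
  have hnorm_sign (k : ℕ) (x : ℚ) : padicNorm p ((-1) ^ k * x) = padicNorm p x := by
    rcases neg_one_pow_eq_or ℚ k with h | h <;> simp [h]
  have hterm (k : ℕ) (hk : k ≤ m) :
      (-1 : ℚ) ^ k * ((2 * m + 1).choose k : ℚ) *
        (((2 * (2 * m + 1) - 2 * k).choose (2 * m + 1) : ℕ) : ℚ) * r ^ (2 * m + 1 - 2 * k)
      = (-1) ^ k * (oddCoeff m (m - k) * r ^ (2 * (m - k) + 1)) := by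
    rw [oddCoeff, show m - (m - k) = k by omega,
      show 2 * m + 2 * (m - k) + 2 = 2 * (2 * m + 1) - 2 * k by omega,
      show 2 * (m - k) + 1 = 2 * m + 1 - 2 * k by omega]
    push_cast
    ring
  have hsum : padicNorm p (∑ k ∈ Finset.range m,
      (-1 : ℚ) ^ k * (oddCoeff m (m - k) * r ^ (2 * (m - k) + 1)))
      < padicNorm p ((-1) ^ m * (oddCoeff m 0 * r)) := by
    rw [hnorm_sign]
    refine padicNorm.sum_lt' (fun k hk => ?_)
      (lt_of_le_of_ne (padicNorm.nonneg _) (padicNorm.nonzero hc0).symm)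
    rw [hnorm_sign]
    have := Finset.mem_range.mp hk
    exact padicNorm_term_lt p hp3 r hr m (m - k) (by omega) (by omega)
  have hL : legendreP (2 * m + 1) r = (1 / 2 ^ (2 * m + 1)) *
      (∑ k ∈ Finset.range m, (-1 : ℚ) ^ k * (oddCoeff m (m - k) * r ^ (2 * (m - k) + 1))
        + (-1) ^ m * (oddCoeff m 0 * r)) := by
    rw [legendreP, show (2 * m + 1) / 2 = m by omega,
      Finset.sum_congr rfl (fun k hk => hterm k (by have := Finset.mem_range.mp hk; omega)),
      Finset.sum_range_succ]
    simp
  have h2 : padicValRat p 2 = 0 := by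
    have : padicValNat p 2 = 0 :=
      padicValNat.eq_zero_of_not_dvd fun h => by
        have := Nat.le_of_dvd (by norm_num) h
        omega
    have h' := padicValRat.of_nat (p := p) (n := 2)
    rw [this] at h'
    simpa using h'
  have hS := (padicNorm.add_eq_max_of_ne hsum.ne).trans (max_eq_right hsum.le)
  rw [hnorm_sign] at hS
  set S : ℚ := ∑ k ∈ Finset.range m, (-1 : ℚ) ^ k * (oddCoeff m (m - k) * r ^ (2 * (m - k) + 1))
        + (-1) ^ m * (oddCoeff m 0 * r) with hSdef
  have hS0 : S ≠ 0 := by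
    intro h
    rw [h, padicNorm.zero] at hS
    exact padicNorm.nonzero hc0 hS.symm
  have hval : padicValRat p S = padicValRat p (oddCoeff m 0 * r) := by
    rw [padicNorm.eq_zpow_of_nonzero hS0, padicNorm.eq_zpow_of_nonzero hc0] at hS
    have hp1 : (1 : ℚ) < p := by exact_mod_cast hp.one_lt
    have := zpow_right_injective₀ (by linarith) hp1.ne' hS
    simpa using this
  have hn0 : ((2 * m + 1 : ℕ) : ℚ) ≠ 0 := by positivity
  have hch0 : (((2 * m).choose m : ℕ) : ℚ) ≠ 0 := by exact_mod_cast hch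
  rw [hL, padicValRat.mul (by positivity) hS0, padicValRat.div one_ne_zero (by positivity),
    padicValRat.pow, h2, hval, oddCoeff_zero, Nat.add_sub_cancel,
    Nat.mul_div_cancel_left _ two_pos, Nat.cast_mul, Nat.cast_mul,
    padicValRat.mul (by positivity) hr0, padicValRat.mul (by norm_num) (mul_ne_zero hn0 hch0),
    padicValRat.mul hn0 hch0, Nat.cast_ofNat, h2,
    padicValRat.of_nat, padicValRat.of_nat]
  simp
  ring
end

section
/- Let r be a rational number with ν_2(r) ≥ 1. Then for every even integer n ≥ 0, ν_2(P_n(r)) = ν_2(C(n, n/2)) − n, where C(n,k) denotes the binomial coefficient. -/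
/-- Ultrametric inequality for finite sums, with the strict lower bound required only of the
terms; the sum must be nonzero because `padicValRat` takes the value `0` at `0`. -/
lemma lt_padicVal_sum (c : ℤ) (F : ℕ → ℚ) (n : ℕ) (hF : ∀ i < n, c < padicValRat 2 (F i))
    (h0 : ∑ i ∈ Finset.range n, F i ≠ 0) :
    c < padicValRat 2 (∑ i ∈ Finset.range n, F i) := by
  induction n with
  | zero => simp at h0
  | succ d ih =>
    rw [Finset.sum_range_succ] at h0 ⊢
    by_cases h : ∑ i ∈ Finset.range d, F i = 0
    · rw [h, zero_add]
      exact hF d (Nat.lt_succ_self d)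
    · exact lt_of_lt_of_le
        (lt_min (ih (fun i hi => hF i (Nat.lt_succ_of_lt hi)) h) (hF d (Nat.lt_succ_self d)))
        (padicValRat.min_le_padicValRat_add h0)

/-- The coefficients of `2^(2m) P_(2m)` are 2-adically smallest at the constant term. -/
lemma padicVal_choose_le (m k : ℕ) (hk : k ≤ m) :
    padicValNat 2 ((2 * m).choose m) ≤
      padicValNat 2 ((2 * m).choose k) + padicValNat 2 ((2 * (2 * m - k)).choose (2 * m)) := by
  have fact_val (N : ℕ) : padicValNat 2 (2 * N).factorial = padicValNat 2 N.factorial + N :=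
    padicValNat_factorial_mul N
  have choose_val (a b : ℕ) (h : b ≤ a) : padicValNat 2 (a.choose b) +
      padicValNat 2 b.factorial + padicValNat 2 (a - b).factorial
        = padicValNat 2 a.factorial := by
    rw [← Nat.choose_mul_factorial_mul_factorial h,
      padicValNat.mul (mul_ne_zero (Nat.choose_pos h).ne' (Nat.factorial_ne_zero _))
        (Nat.factorial_ne_zero _),
      padicValNat.mul (Nat.choose_pos h).ne' (Nat.factorial_ne_zero _)]
  have h1 := choose_val (2 * m) m (by omega)
  have h2 := choose_val (2 * m) k (by omega)
  have h3 := choose_val (2 * (2 * m - k)) (2 * m) (by omega)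
  have h4 := choose_val m k hk
  rw [show 2 * m - m = m by omega] at h1
  rw [show 2 * (2 * m - k) - 2 * m = 2 * (m - k) by omega] at h3
  simp only [fact_val] at h1 h2 h3
  omega

theorem stmt2 (r : ℚ) (hr : 1 ≤ padicValRat 2 r) (n : ℕ) (hn : Even n) :
    padicValRat 2 (legendreP n r) = padicValNat 2 (n.choose (n / 2)) - n := by
  obtain ⟨m, rfl⟩ := hn
  have hr0 : r ≠ 0 := by
    rintro rfl
    simp at hr
  have v_sign (k : ℕ) : padicValRat 2 ((-1 : ℚ) ^ k) = 0 := by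
    rcases neg_one_pow_eq_or ℚ k with h | h <;> simp [h]
  have sign_ne (k : ℕ) : (-1 : ℚ) ^ k ≠ 0 := pow_ne_zero _ (by norm_num)
  rw [← two_mul, show 2 * m / 2 = m by omega]
  unfold legendreP
  rw [show 2 * m / 2 = m by omega, Finset.sum_range_succ]
  set S := ∑ k ∈ Finset.range m, (-1 : ℚ) ^ k * ((2 * m).choose k : ℚ) *
    (((2 * (2 * m) - 2 * k).choose (2 * m) : ℕ) : ℚ) * r ^ (2 * m - 2 * k) with hS
  set T : ℚ := (-1 : ℚ) ^ m * ((2 * m).choose m : ℚ) *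
    (((2 * (2 * m) - 2 * m).choose (2 * m) : ℕ) : ℚ) * r ^ (2 * m - 2 * m) with hT
  have hc : ((2 * m).choose m : ℚ) ≠ 0 := by
    exact_mod_cast (Nat.choose_pos (by omega)).ne'
  have hT' : T = (-1 : ℚ) ^ m * ((2 * m).choose m : ℚ) := by
    rw [hT, show 2 * (2 * m) - 2 * m = 2 * m by omega]
    simp
  have hT0 : T ≠ 0 := by
    rw [hT']
    exact mul_ne_zero (sign_ne m) hc
  have vT : padicValRat 2 T = padicValNat 2 ((2 * m).choose m) := by
    rw [hT', padicValRat.mul (sign_ne m) hc, v_sign, zero_add, padicValRat.of_nat]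
  have vS : S ≠ 0 → padicValRat 2 T < padicValRat 2 S := by
    intro hS0
    refine lt_padicVal_sum _ _ _ (fun k hk => ?_) hS0
    have ha : ((2 * m).choose k : ℚ) ≠ 0 := by
      exact_mod_cast (Nat.choose_pos (by omega)).ne'
    have hb : (((2 * (2 * m) - 2 * k).choose (2 * m) : ℕ) : ℚ) ≠ 0 := by
      exact_mod_cast (Nat.choose_pos (by omega)).ne'
    rw [padicValRat.mul (mul_ne_zero (mul_ne_zero (sign_ne k) ha) hb) (pow_ne_zero _ hr0),
      padicValRat.mul (mul_ne_zero (sign_ne k) ha) hb, padicValRat.mul (sign_ne k) ha,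
      v_sign, padicValRat.pow, vT, padicValRat.of_nat, padicValRat.of_nat]
    have key := padicVal_choose_le m k hk.le
    rw [show 2 * (2 * m - k) = 2 * (2 * m) - 2 * k by omega] at key
    have hpos : 0 < ((2 * m - 2 * k : ℕ) : ℤ) * padicValRat 2 r :=
      mul_pos (by omega) (by omega)
    omega
  have hval : S + T ≠ 0 ∧ padicValRat 2 (S + T) = padicValRat 2 T := by
    by_cases hS0 : S = 0
    · simp [hS0, hT0]
    · have hlt := vS hS0
      -- `S = -T` is impossible, since the valuations of `S` and `T` differ.
      have hne : T + S ≠ 0 := by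
        intro h
        rw [eq_neg_of_add_eq_zero_right h, padicValRat.neg] at hlt
        exact lt_irrefl _ hlt
      rw [add_comm]
      exact ⟨hne, padicValRat.add_eq_of_lt hne hT0 hS0 hlt⟩
  rw [padicValRat.mul (by positivity) hval.1, hval.2, vT, one_div, padicValRat.inv,
    padicValRat.pow]
  have h2 : padicValRat 2 (2 : ℚ) = 1 := by
    exact_mod_cast padicValRat.self (p := 2) (by norm_num)
  rw [h2]
  ring
end

section
/- Let r be a rational number with ν_2(r) ≥ 1. Then for every odd integer n ≥ 1, ν_2(P_n(r)) = ν_2(C(n−1, (n−1)/2)) + ν_2(r) + 1 − n, where C(n,k) denotes the binomial coefficient. -/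
open Nat in
/-- The power of two in `c_j`, for `k = m - j`: both `(2a)! = 2 ^ a * a! * (2a-1)‼` and
`(2j+1)! = (2j+1)‼ * 2 ^ j * j!` are used to cancel factorials. -/
lemma coeff_mul_factorials (k j : ℕ) :
    (2 * (k + j) + 1).choose k * (2 * (k + 2 * j + 1)).choose (2 * (k + j) + 1)
      * (k ! * j ! * (2 * j + 1)‼) = (2 * (k + 2 * j) + 1)‼ * 2 ^ (k + j + 1) := by
  have h1 := Nat.add_choose_mul_factorial_mul_factorial (k + 2 * j + 1) k
  have h2 := Nat.add_choose_mul_factorial_mul_factorial (2 * j + 1) (2 * (k + j) + 1)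
  rw [show k + 2 * j + 1 + k = 2 * (k + j) + 1 by ring] at h1
  rw [show 2 * j + 1 + (2 * (k + j) + 1) = 2 * (k + 2 * j) + 1 + 1 by ring,
    Nat.factorial_eq_mul_doubleFactorial (2 * (k + 2 * j) + 1),
    show 2 * (k + 2 * j) + 1 + 1 = 2 * (k + 2 * j + 1) by ring,
    Nat.doubleFactorial_two_mul, ← h1,
    Nat.factorial_eq_mul_doubleFactorial (2 * j), Nat.doubleFactorial_two_mul] at h2
  have hp : 0 < (k + 2 * j + 1)! * 2 ^ j := by positivity
  apply Nat.eq_of_mul_eq_mul_right hp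
  rw [show 2 ^ (k + 2 * j + 1) = 2 ^ (k + j + 1) * 2 ^ j by ring] at h2
  linear_combination h2

open Nat in
lemma coeff_comparison (k j : ℕ) :
    (2 * (k + j) + 1).choose k * (2 * (k + 2 * j + 1)).choose (2 * (k + j) + 1)
      * ((2 * j + 1)‼ * (2 * (k + j) + 1)‼)
    = (2 * (k + j) + 1).choose (k + j) * (2 * (k + j + 1)).choose (2 * (k + j) + 1)
      * ((k + j).choose k * (2 * (k + 2 * j) + 1)‼) := by
  have h1 := coeff_mul_factorials k j
  have h0 := coeff_mul_factorials (k + j) 0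
  have hc := Nat.add_choose_mul_factorial_mul_factorial j k
  rw [Nat.add_comm j k] at hc
  simp only [Nat.mul_zero, Nat.add_zero, Nat.zero_add, Nat.factorial_zero, Nat.mul_one,
    show Nat.doubleFactorial 1 = 1 from rfl] at h0
  have hp : 0 < k ! * j ! := by positivity
  apply Nat.eq_of_mul_eq_mul_right hp
  rw [← hc] at h0
  zify at *
  linear_combination ((2 * (k + j) + 1)‼ : ℤ) * h1 - ((2 * (k + 2 * j) + 1)‼ : ℤ) * h0

lemma leading_coeff (m : ℕ) :
    (2 * m + 1).choose m * (2 * (m + 1)).choose (2 * m + 1)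
      = 2 * ((2 * m + 1) * (2 * m).choose m) := by
  have h : (2 * (m + 1)).choose (2 * m + 1) = 2 * m + 2 := Nat.choose_succ_self_right (2 * m + 1)
  have h2 := Nat.add_one_mul_choose_eq (2 * m) m
  have h3 : (2 * m + 1).choose (m + 1) = (2 * m + 1).choose m :=
    Nat.choose_symm_of_eq_add (by ring)
  rw [h3] at h2
  rw [h, h2]
  ring

lemma odd_doubleFactorial (m : ℕ) : Odd (Nat.doubleFactorial (2 * m + 1)) := by
  induction m with
  | zero => simp
  | succ m ih =>
    rw [show 2 * (m + 1) + 1 = 2 * m + 1 + 2 by ring, Nat.doubleFactorial_add_two]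
    exact Odd.mul ⟨m + 1, by ring⟩ ih

lemma padicNorm_odd {a : ℕ} (h : Odd a) : padicNorm 2 (a : ℚ) = 1 :=
  (padicNorm.nat_eq_one_iff a).mpr h.not_two_dvd_nat

/-- The term with `k = m - j`, `j ≥ 1`, is 2-adically smaller than the linear one:
their quotient is `C(m, j) * r ^ (2j)` up to a 2-adic unit. -/
lemma term_lt (r : ℚ) (h0 : r ≠ 0) (hr : padicNorm 2 r < 1) (k j : ℕ) (hj : j ≠ 0) :
    padicNorm 2 ((-1 : ℚ) ^ k * ((2 * (k + j) + 1).choose k : ℚ)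
        * ((2 * (k + 2 * j + 1)).choose (2 * (k + j) + 1) : ℚ) * r ^ (2 * j + 1))
      < padicNorm 2 ((-1 : ℚ) ^ (k + j) * ((2 * (k + j) + 1).choose (k + j) : ℚ)
        * ((2 * (k + j + 1)).choose (2 * (k + j) + 1) : ℚ) * r) := by
  have hneg : ∀ i : ℕ, padicNorm 2 ((-1 : ℚ) ^ i) = 1 := fun i => by
    rcases neg_one_pow_eq_or ℚ i with h | h <;> simp [h]
  have hpow : ∀ i : ℕ, padicNorm 2 (r ^ i) = padicNorm 2 r ^ i := fun i => by
    induction i with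
    | zero => simp
    | succ i ih => rw [pow_succ, padicNorm.mul, ih, pow_succ]
  have key := congrArg (fun x : ℕ => padicNorm 2 (x : ℚ)) (coeff_comparison k j)
  simp only [Nat.cast_mul, padicNorm.mul, padicNorm_odd (odd_doubleFactorial _), mul_one] at key
  simp only [padicNorm.mul, hneg, one_mul, hpow]
  rw [key]
  have hA : 0 < padicNorm 2 ((2 * (k + j) + 1).choose (k + j) : ℚ)
      * padicNorm 2 ((2 * (k + j + 1)).choose (2 * (k + j) + 1) : ℚ) * padicNorm 2 r := by
    rw [← padicNorm.mul, ← padicNorm.mul]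
    refine lt_of_le_of_ne (padicNorm.nonneg _) (padicNorm.nonzero ?_).symm
    have h1 := (Nat.choose_pos (show k + j ≤ 2 * (k + j) + 1 by omega)).ne'
    have h2 := (Nat.choose_pos (show 2 * (k + j) + 1 ≤ 2 * (k + j + 1) by omega)).ne'
    exact mul_ne_zero (mul_ne_zero (by exact_mod_cast h1) (by exact_mod_cast h2)) h0
  have hB : padicNorm 2 ((k + j).choose k : ℚ) * padicNorm 2 r ^ (2 * j) < 1 :=
    mul_lt_one_of_nonneg_of_lt_one_right (padicNorm.of_nat _)
      (pow_nonneg (padicNorm.nonneg _) _)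
      (pow_lt_one₀ (padicNorm.nonneg _) hr (by omega))
  have := mul_lt_mul_of_pos_left hB hA
  rw [pow_succ]
  linarith

theorem stmt3 (r : ℚ) (hr : 1 ≤ padicValRat 2 r) (n : ℕ) (hn : Odd n) :
    padicValRat 2 (legendreP n r)
      = padicValNat 2 ((n - 1).choose ((n - 1) / 2)) + padicValRat 2 r + 1 - n := by
  obtain ⟨m, rfl⟩ := hn
  -- the valuation of `0` is the junk value `0`, so the hypothesis excludes `r = 0`
  have h0 : r ≠ 0 := by
    rintro rfl
    simp at hr
  have hr1 : padicNorm 2 r < 1 := by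
    rw [padicNorm.eq_zpow_of_nonzero h0]
    exact zpow_lt_one_of_neg₀ (by norm_num) (by omega)
  set f : ℕ → ℚ := fun k => (-1 : ℚ) ^ k * ((2 * m + 1).choose k : ℚ)
    * (((2 * (2 * m + 1) - 2 * k).choose (2 * m + 1) : ℕ) : ℚ) * r ^ (2 * m + 1 - 2 * k) with hf
  have hfm : f m = (-1 : ℚ) ^ m * ((2 * m + 1).choose m : ℚ)
      * ((2 * (m + 1)).choose (2 * m + 1) : ℚ) * r := by
    simp only [hf]
    rw [show 2 * (2 * m + 1) - 2 * m = 2 * (m + 1) by omega,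
      show 2 * m + 1 - 2 * m = 1 by omega, pow_one]
  have hfm' : f m = (-1 : ℚ) ^ m * (2 * (((2 * m + 1 : ℕ) : ℚ) * ((2 * m).choose m : ℚ)) * r) := by
    rw [hfm, mul_assoc ((-1 : ℚ) ^ m), ← Nat.cast_mul, leading_coeff]
    push_cast
    ring
  have hc0 : ((2 * m).choose m : ℚ) ≠ 0 := by
    exact_mod_cast (Nat.choose_pos (by omega : m ≤ 2 * m)).ne'
  have ho : ((2 * m + 1 : ℕ) : ℚ) ≠ 0 := by positivity
  have hfm0 : f m ≠ 0 := by
    rw [hfm']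
    exact mul_ne_zero (by simp) (mul_ne_zero (mul_ne_zero two_ne_zero (mul_ne_zero ho hc0)) h0)
  have hpos : 0 < padicNorm 2 (f m) :=
    lt_of_le_of_ne (padicNorm.nonneg _) (padicNorm.nonzero hfm0).symm
  have hrest : padicNorm 2 (∑ k ∈ Finset.range m, f k) < padicNorm 2 (f m) := by
    refine padicNorm.sum_lt' (fun k hk => ?_) hpos
    obtain ⟨j, rfl⟩ := Nat.exists_eq_add_of_lt (Finset.mem_range.mp hk)
    have := term_lt r h0 hr1 k (j + 1) (by omega)
    rw [hfm]
    simp only [hf]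
    rw [show 2 * (2 * (k + j + 1) + 1) - 2 * k = 2 * (k + 2 * (j + 1) + 1) by omega,
      show 2 * (k + j + 1) + 1 - 2 * k = 2 * (j + 1) + 1 by omega]
    exact this
  have hsum : padicNorm 2 (∑ k ∈ Finset.range (m + 1), f k) = padicNorm 2 (f m) := by
    rw [Finset.sum_range_succ, padicNorm.add_eq_max_of_ne hrest.ne, max_eq_right hrest.le]
  have hS0 : ∑ k ∈ Finset.range (m + 1), f k ≠ 0 := by
    intro h
    rw [h, padicNorm.zero] at hsum
    exact hpos.ne hsum
  have hval : padicValRat 2 (∑ k ∈ Finset.range (m + 1), f k) = padicValRat 2 (f m) := by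
    rw [padicNorm.eq_zpow_of_nonzero hS0, padicNorm.eq_zpow_of_nonzero hfm0] at hsum
    have := zpow_right_injective₀ (by norm_num) (by norm_num) hsum
    omega
  have hvm : padicValRat 2 (f m)
      = 1 + padicValNat 2 ((2 * m).choose m) + padicValRat 2 r := by
    have hv2 : padicValRat 2 (2 : ℚ) = 1 := by
      exact_mod_cast padicValRat.self (p := 2) (by norm_num)
    have hvo : padicValRat 2 ((2 * m + 1 : ℕ) : ℚ) = 0 := by
      rw [padicValRat.of_nat, padicValNat.eq_zero_of_not_dvd (by omega), Nat.cast_zero]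
    have hvs : padicValRat 2 ((-1 : ℚ) ^ m) = 0 := by
      rcases neg_one_pow_eq_or ℚ m with h | h <;> simp [h]
    rw [hfm', padicValRat.mul (by simp)
        (mul_ne_zero (mul_ne_zero two_ne_zero (mul_ne_zero ho hc0)) h0),
      padicValRat.mul (mul_ne_zero two_ne_zero (mul_ne_zero ho hc0)) h0,
      padicValRat.mul two_ne_zero (mul_ne_zero ho hc0), padicValRat.mul ho hc0,
      hv2, hvo, hvs, padicValRat.of_nat]
    ring
  have hP : legendreP (2 * m + 1) r
      = (∑ k ∈ Finset.range (m + 1), f k) / (2 : ℚ) ^ (2 * m + 1) := by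
    unfold legendreP
    rw [show (2 * m + 1) / 2 = m by omega]
    ring
  have hv2n : padicValRat 2 ((2 : ℚ) ^ (2 * m + 1)) = ((2 * m + 1 : ℕ) : ℤ) := by
    rw [padicValRat.pow, show padicValRat 2 (2 : ℚ) = 1 from
      mod_cast padicValRat.self (p := 2) (by norm_num), mul_one]
  rw [hP, padicValRat.div hS0 (by positivity), hval, hvm, hv2n,
    show 2 * m + 1 - 1 = 2 * m by omega, show 2 * m / 2 = m by omega]
  ring
end

section
/- Let p ≥ 3 be a prime number. Then for every integer m ≥ 0, ν_p(P_{2m}(p)) = ν_p(C(2m, m)), where C(n,k) denotes the binomial coefficient. -/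
/-- The even factors of `(2m+1)⋯(2m+2j)` are twice the factors of `(m+1)⋯(m+j)`; stated with
factorials cleared of denominators. -/
lemma factorial_dvd (m j : ℕ) :
    ∃ E : ℕ, (2 * m + 2 * j).factorial * m.factorial
      = (2 * m).factorial * (m + j).factorial * E := by
  induction j with
  | zero => exact ⟨1, by simp⟩
  | succ j ih =>
    obtain ⟨E, hE⟩ := ih
    refine ⟨2 * (2 * m + 2 * j + 1) * E, ?_⟩
    have h1 : 2 * m + 2 * (j + 1) = (2 * m + 2 * j + 1) + 1 := by ring
    rw [h1, ← add_assoc, Nat.factorial_succ, Nat.factorial_succ, Nat.factorial_succ (m + j)]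
    linear_combination (2 * m + 2 * j + 1 + 1) * (2 * m + 2 * j + 1) * hE

lemma centralBinom_dvd_coeff (k j : ℕ) :
    (2 * (k + j)).choose (k + j) ∣
      (2 * (k + j)).choose k * (2 * (k + j) + 2 * j).choose (2 * (k + j))
        * (2 * j).factorial := by
  obtain ⟨E, hE⟩ := factorial_dvd (k + j) j
  refine ⟨(k + j).descFactorial j * E, ?_⟩
  have h1 : (2 * (k + j)).choose k * k.factorial * (k + j + j).factorial
      = (2 * (k + j)).factorial := by
    have := Nat.choose_mul_factorial_mul_factorial (n := 2 * (k + j)) (k := k) (by omega)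
    rwa [show 2 * (k + j) - k = k + j + j by omega] at this
  have h2 : (2 * (k + j) + 2 * j).choose (2 * (k + j)) * (2 * (k + j)).factorial
      * (2 * j).factorial = (2 * (k + j) + 2 * j).factorial := by
    have := Nat.choose_mul_factorial_mul_factorial (n := 2 * (k + j) + 2 * j)
      (k := 2 * (k + j)) (by omega)
    rwa [Nat.add_sub_cancel_left] at this
  have h3 : (2 * (k + j)).choose (k + j) * (k + j).factorial * (k + j).factorial
      = (2 * (k + j)).factorial := by
    have := Nat.choose_mul_factorial_mul_factorial (n := 2 * (k + j)) (k := k + j) (by omega)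
    rwa [show 2 * (k + j) - (k + j) = k + j by omega] at this
  have h4 : k.factorial * (k + j).descFactorial j = (k + j).factorial := by
    have := Nat.factorial_mul_descFactorial (n := k + j) (k := j) (by omega)
    rwa [Nat.add_sub_cancel] at this
  have hpos : 0 < k.factorial * (k + j + j).factorial * (k + j).factorial := by positivity
  apply Nat.eq_of_mul_eq_mul_right hpos
  generalize (2 * (k + j)).choose k = A at *
  generalize (2 * (k + j) + 2 * j).choose (2 * (k + j)) = B at *
  generalize (2 * (k + j)).choose (k + j) = C at *
  generalize (k + j).descFactorial j = D at *
  calc A * B * (2 * j).factorial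
        * (k.factorial * (k + j + j).factorial * (k + j).factorial)
      = B * (A * k.factorial * (k + j + j).factorial) * (2 * j).factorial
        * (k + j).factorial := by ring
    _ = C * (k + j).factorial * (k + j).factorial * (k + j + j).factorial * E := by
        rw [h1, h2, hE, h3]
    _ = C * (k.factorial * D) * (k + j).factorial * (k + j + j).factorial * E := by rw [h4]
    _ = _ := by ring

lemma pow_dvd_term {p : ℕ} (hp : p.Prime) (hp3 : 3 ≤ p) (k j : ℕ) (hj : j ≠ 0) :
    p ^ (padicValNat p ((2 * (k + j)).choose (k + j)) + 1) ∣
      (2 * (k + j)).choose k * (2 * (k + j) + 2 * j).choose (2 * (k + j)) * p ^ (2 * j) := by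
  have := Fact.mk hp
  have hdvd := centralBinom_dvd_coeff k j
  have hC : p ^ padicValNat p ((2 * (k + j)).choose (k + j)) ∣ (2 * (k + j)).choose (k + j) :=
    pow_padicValNat_dvd
  generalize padicValNat p ((2 * (k + j)).choose (k + j)) = v at *
  have he : padicValNat p (2 * j).factorial < 2 * j := by
    have h := sub_one_mul_padicValNat_factorial_lt_of_ne_zero p (n := 2 * j) (by omega)
    refine lt_of_le_of_lt (Nat.le_mul_of_pos_left _ (by omega)) h
  obtain ⟨c, hc⟩ := pow_padicValNat_dvd (p := p) (n := (2 * j).factorial)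
  have hpc : ¬ p ∣ c := by
    rintro ⟨d, rfl⟩
    refine pow_succ_padicValNat_not_dvd (p := p) (n := (2 * j).factorial)
      (Nat.factorial_ne_zero _) ⟨d, ?_⟩
    rw [pow_succ, mul_assoc]; exact hc
  generalize padicValNat p (2 * j).factorial = e at *
  have hcop : Nat.Coprime (p ^ (v + 1)) c :=
    Nat.Coprime.pow_left _ ((Nat.Prime.coprime_iff_not_dvd hp).2 hpc)
  apply hcop.dvd_of_dvd_mul_right
  obtain ⟨D, hD⟩ := hC.trans hdvd
  obtain ⟨f, hf⟩ : ∃ f, 2 * j = f + (e + 1) := ⟨2 * j - (e + 1), by omega⟩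
  rw [hc] at hD
  generalize (2 * (k + j) + 2 * j).choose (2 * (k + j)) = B at *
  refine ⟨D * p ^ f, ?_⟩
  rw [hf]
  linear_combination p ^ (f + 1) * hD

theorem stmt4 (p : ℕ) (hp : p.Prime) (hp3 : 3 ≤ p) (m : ℕ) :
    padicValRat p (legendreP (2 * m) (p : ℚ)) = padicValNat p ((2 * m).choose m) := by
  have := Fact.mk hp
  obtain ⟨c, hc⟩ := pow_padicValNat_dvd (p := p) (n := (2 * m).choose m)
  have hpc : ¬ p ∣ c := by
    rintro ⟨d, rfl⟩
    refine pow_succ_padicValNat_not_dvd (p := p) (n := (2 * m).choose m)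
      (Nat.choose_pos (by omega)).ne' ⟨d, ?_⟩
    rw [pow_succ, mul_assoc]; exact hc
  have hterm : ∀ k ∈ Finset.range m, (p : ℤ) ^ (padicValNat p ((2 * m).choose m) + 1) ∣
      (-1 : ℤ) ^ k * ((2 * m).choose k : ℤ) * (((2 * (2 * m) - 2 * k).choose (2 * m) : ℕ) : ℤ)
        * (p : ℤ) ^ (2 * m - 2 * k) := by
    intro k hk
    obtain ⟨j, rfl⟩ := Nat.exists_eq_add_of_lt (Finset.mem_range.1 hk)
    have h := Int.natCast_dvd_natCast.2 (pow_dvd_term hp hp3 k (j + 1) (by omega))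
    rw [show 2 * (2 * (k + j + 1)) - 2 * k = 2 * (k + (j + 1)) + 2 * (j + 1) by omega,
      show 2 * (k + j + 1) - 2 * k = 2 * (j + 1) by omega, add_assoc k j 1]
    push_cast at h
    rw [mul_assoc, mul_assoc, ← mul_assoc (Nat.cast _)]
    exact h.mul_left _
  obtain ⟨T, hT⟩ := Finset.dvd_sum hterm
  generalize padicValNat p ((2 * m).choose m) = v at *
  have key : legendreP (2 * m) (p : ℚ)
      = ((((-1 : ℤ) ^ m * c + p * T : ℤ) : ℚ) * (p : ℚ) ^ v) / (((2 ^ (2 * m) : ℕ) : ℤ) : ℚ) := by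
    have hT' := congrArg (Int.cast : ℤ → ℚ) hT
    have hc' := congrArg (Nat.cast : ℕ → ℚ) hc
    push_cast at hT' hc'
    unfold legendreP
    rw [Nat.mul_div_cancel_left m (by norm_num), Finset.sum_range_succ, hT',
      show 2 * (2 * m) - 2 * m = 2 * m by omega, Nat.choose_self, hc', Nat.sub_self]
    push_cast
    ring
  have hu : ¬ (p : ℤ) ∣ (-1 : ℤ) ^ m * c + p * T := by
    rw [Int.dvd_add_left (Dvd.intro _ rfl)]
    intro h
    have : (p : ℤ) ∣ (c : ℤ) := by
      rcases neg_one_pow_eq_or ℤ m with h1 | h1 <;> simpa [h1] using h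
    exact hpc (Int.natCast_dvd_natCast.1 this)
  have h2 : ¬ (p : ℤ) ∣ ((2 ^ (2 * m) : ℕ) : ℤ) := by
    intro h
    have := Nat.le_of_dvd two_pos (hp.dvd_of_dvd_pow (Int.natCast_dvd_natCast.1 h))
    omega
  have hu0 : (-1 : ℤ) ^ m * c + p * T ≠ 0 := fun h => hu (h ▸ dvd_zero _)
  have hp0 : (p : ℚ) ≠ 0 := by exact_mod_cast hp.ne_zero
  rw [key, padicValRat.div (mul_ne_zero (by exact_mod_cast hu0) (pow_ne_zero _ hp0))
      (by positivity), padicValRat.mul (by exact_mod_cast hu0) (pow_ne_zero _ hp0),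
    padicValRat.pow, padicValRat.self hp.one_lt, padicValRat.of_int, padicValRat.of_int,
    padicValInt.eq_zero_of_not_dvd hu, padicValInt.eq_zero_of_not_dvd h2]
  simp
end

section
/- Let p ≥ 3 be a prime number. Then for every integer m ≥ 0, ν_p(P_{2m+1}(p)) = 1 + ν_p(2m+1) + ν_p(C(2m, m)), where C(n,k) denotes the binomial coefficient. -/
/-- The recursion between consecutive coefficients of the same parity, for degree `2m + 1` with
`m = j + 1 + r`. -/
lemma coeff_rec (j r : ℕ) :
    (2 * j + 2) * (2 * j + 3) *
        ((2 * (j + 1 + r) + 1).choose r * (2 * (j + 1 + r) + 4 + 2 * j).choose (2 * (j + 1 + r) + 1))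
      = 2 * (2 * (j + 1 + r) + 2 * j + 3) * (r + 1) *
        ((2 * (j + 1 + r) + 1).choose (r + 1) *
          (2 * (j + 1 + r) + 2 + 2 * j).choose (2 * (j + 1 + r) + 1)) := by
  have h1 := Nat.choose_succ_right_eq (2 * (j + 1 + r) + 1) r
  have h2 := Nat.choose_mul_succ_eq (2 * (j + 1 + r) + 2 + 2 * j) (2 * (j + 1 + r) + 1)
  have h3 := Nat.choose_mul_succ_eq (2 * (j + 1 + r) + 3 + 2 * j) (2 * (j + 1 + r) + 1)
  rw [show 2 * (j + 1 + r) + 1 - r = 2 * j + r + 3 by omega] at h1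
  rw [show 2 * (j + 1 + r) + 2 + 2 * j + 1 - (2 * (j + 1 + r) + 1) = 2 * j + 2 by omega,
    show 2 * (j + 1 + r) + 2 + 2 * j + 1 = 2 * (j + 1 + r) + 3 + 2 * j by omega] at h2
  rw [show 2 * (j + 1 + r) + 3 + 2 * j + 1 - (2 * (j + 1 + r) + 1) = 2 * j + 3 by omega,
    show 2 * (j + 1 + r) + 3 + 2 * j + 1 = 2 * (j + 1 + r) + 4 + 2 * j by omega] at h3
  generalize (2 * (j + 1 + r) + 1).choose r = a at *
  generalize (2 * (j + 1 + r) + 1).choose (r + 1) = b at *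
  generalize (2 * (j + 1 + r) + 2 + 2 * j).choose (2 * (j + 1 + r) + 1) = c at *
  generalize (2 * (j + 1 + r) + 3 + 2 * j).choose (2 * (j + 1 + r) + 1) = d at *
  generalize (2 * (j + 1 + r) + 4 + 2 * j).choose (2 * (j + 1 + r) + 1) = e at *
  calc (2 * j + 2) * (2 * j + 3) * (a * e) = a * (2 * j + 2) * (e * (2 * j + 3)) := by ring
    _ = 2 * (a * (2 * j + r + 3)) * (d * (2 * j + 2)) := by rw [← h3]; ring
    _ = _ := by rw [← h1, ← h2]; ring

lemma coeff_zero (m : ℕ) :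
    (2 * m + 1).choose m * (2 * m + 2).choose (2 * m + 1)
      = 2 * ((2 * m + 1) * (2 * m).choose m) := by
  have h := Nat.choose_mul_succ_eq (2 * m) m
  rw [show 2 * m + 1 - m = m + 1 by omega] at h
  rw [show (2 * m + 2).choose (2 * m + 1) = 2 * m + 2 from Nat.choose_succ_self_right _]
  linarith

/-- The linear coefficient divides `(2j+1)!` times the coefficient of `x ^ (2j+1)`. -/
lemma coeff_dvd (m j : ℕ) (h : j ≤ m) :
    2 * ((2 * m + 1) * (2 * m).choose m) ∣ (2 * j + 1).factorial *
      ((2 * m + 1).choose (m - j) * (2 * m + 2 + 2 * j).choose (2 * m + 1)) := by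
  induction j with
  | zero => simp only [Nat.sub_zero, mul_zero, add_zero, coeff_zero, dvd_mul_left]
  | succ j ih =>
    have ih := ih (by omega)
    obtain ⟨r, rfl⟩ := Nat.exists_eq_add_of_le h
    rw [show j + 1 + r - j = r + 1 by omega] at ih
    rw [show j + 1 + r - (j + 1) = r by omega,
      show 2 * (j + 1 + r) + 2 + 2 * (j + 1) = 2 * (j + 1 + r) + 4 + 2 * j by ring,
      show (2 * (j + 1) + 1).factorial
        = (2 * j + 1).factorial * ((2 * j + 2) * (2 * j + 3)) by
          rw [show 2 * (j + 1) + 1 = 2 * j + 1 + 1 + 1 by ring, Nat.factorial_succ,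
            Nat.factorial_succ]; ring,
      mul_assoc (2 * j + 1).factorial, coeff_rec, mul_left_comm (2 * j + 1).factorial]
    exact Dvd.dvd.mul_left ih _

lemma val_factorial_lt (p : ℕ) [Fact p.Prime] (hp3 : 3 ≤ p) (j : ℕ) (hj : 1 ≤ j) :
    padicValNat p (2 * j + 1).factorial < 2 * j := by
  have h := sub_one_mul_padicValNat_factorial (p := p) (2 * j + 1)
  have h2 : 2 * padicValNat p (2 * j + 1).factorial
      ≤ (p - 1) * padicValNat p (2 * j + 1).factorial :=
    Nat.mul_le_mul_right _ (by omega)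
  omega

/-- A nonlinear term of the sum at `x = p` is `p`-adically smaller than the linear one. -/
lemma term_norm_lt (p : ℕ) [Fact p.Prime] (hp3 : 3 ≤ p) (m j : ℕ) (hj : 1 ≤ j) (hjm : j ≤ m) :
    padicNorm p (((2 * m + 1).choose (m - j) * (2 * m + 2 + 2 * j).choose (2 * m + 1) : ℕ)
        * (p : ℚ) ^ (2 * j + 1))
      < padicNorm p ((2 * ((2 * m + 1) * (2 * m).choose m) : ℕ) * (p : ℚ)) := by
  have hp : p.Prime := Fact.out
  have hp0 : (p : ℚ) ≠ 0 := by exact_mod_cast hp.ne_zero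
  have hp1 : (1 : ℚ) < p := by exact_mod_cast hp.one_lt
  obtain ⟨N, hN⟩ := coeff_dvd m j hjm
  have hA : 2 * ((2 * m + 1) * (2 * m).choose m) ≠ 0 := by
    have := Nat.choose_pos (show m ≤ 2 * m by omega)
    positivity
  generalize 2 * ((2 * m + 1) * (2 * m).choose m) = A at *
  generalize (2 * m + 1).choose (m - j) * (2 * m + 2 + 2 * j).choose (2 * m + 1) = B at *
  have hF : ((2 * j + 1).factorial : ℚ) ≠ 0 := by exact_mod_cast (Nat.factorial_ne_zero _)
  have hB : (B : ℚ) * (p : ℚ) ^ (2 * j + 1)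
      = (A * p) * (N * ((p : ℚ) ^ (2 * j) / (2 * j + 1).factorial)) := by
    have : ((2 * j + 1).factorial : ℚ) * B = A * N := by exact_mod_cast hN
    field_simp
    linear_combination (p : ℚ) ^ (2 * j + 1) * this
  rw [hB, padicNorm.mul (p := p) (A * p : ℚ)]
  have hAp : 0 < padicNorm p (A * p : ℚ) :=
    lt_of_le_of_ne (padicNorm.nonneg _)
      (padicNorm.nonzero (mul_ne_zero (by exact_mod_cast hA) hp0)).symm
  refine mul_lt_of_lt_one_right hAp ?_
  rw [padicNorm.mul]
  refine mul_lt_one_of_nonneg_of_lt_one_right (padicNorm.of_nat N) (padicNorm.nonneg _) ?_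
  rw [padicNorm.eq_zpow_of_nonzero (div_ne_zero (pow_ne_zero _ hp0) hF)]
  refine zpow_lt_one_of_neg₀ hp1 ?_
  rw [padicValRat.div (pow_ne_zero _ hp0) hF, padicValRat.pow, padicValRat.self hp.one_lt,
    padicValRat.of_nat (n := (2 * j + 1).factorial)]
  have := val_factorial_lt p hp3 j hj
  omega

theorem stmt5 (p : ℕ) (hp : p.Prime) (hp3 : 3 ≤ p) (m : ℕ) :
    padicValRat p (legendreP (2 * m + 1) (p : ℚ))
      = 1 + padicValNat p (2 * m + 1) + padicValNat p ((2 * m).choose m) := by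
  have : Fact p.Prime := ⟨hp⟩
  have hp0 : (p : ℚ) ≠ 0 := by exact_mod_cast hp.ne_zero
  have hp1 : (1 : ℚ) < p := by exact_mod_cast hp.one_lt
  have hC : (2 * m).choose m ≠ 0 := (Nat.choose_pos (show m ≤ 2 * m by omega)).ne'
  have hm : 2 * m + 1 ≠ 0 := by omega
  have hCQ : (((2 * m).choose m : ℕ) : ℚ) ≠ 0 := by exact_mod_cast hC
  have hmQ : ((2 * m + 1 : ℕ) : ℚ) ≠ 0 := by exact_mod_cast hm
  have h2 : padicValRat p (2 : ℚ) = 0 := by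
    have : padicValNat p 2 = 0 :=
      padicValNat.eq_zero_of_not_dvd fun h => by have := Nat.le_of_dvd (by norm_num) h; omega
    have h := padicValRat.of_nat (p := p) (n := 2)
    rw [this] at h
    exact_mod_cast h
  have hsign : ∀ (k : ℕ) (q : ℚ), padicNorm p ((-1) ^ k * q) = padicNorm p q := by
    intro k q
    rcases neg_one_pow_eq_or ℚ k with h | h <;> simp [h]
  unfold legendreP
  rw [show (2 * m + 1) / 2 + 1 = m + 1 by omega, Finset.sum_range_succ]
  set R := ∑ k ∈ Finset.range m, (-1 : ℚ) ^ k * ((2 * m + 1).choose k : ℚ) *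
    (((2 * (2 * m + 1) - 2 * k).choose (2 * m + 1) : ℕ) : ℚ) * (p : ℚ) ^ (2 * m + 1 - 2 * k) with hR
  set c := (2 * ((2 * m + 1) * (2 * m).choose m) : ℕ) * (p : ℚ) with hc
  have hlead : (-1 : ℚ) ^ m * ((2 * m + 1).choose m : ℚ) *
      (((2 * (2 * m + 1) - 2 * m).choose (2 * m + 1) : ℕ) : ℚ) * (p : ℚ) ^ (2 * m + 1 - 2 * m)
      = (-1) ^ m * c := by
    rw [show 2 * (2 * m + 1) - 2 * m = 2 * m + 2 by omega, show 2 * m + 1 - 2 * m = 1 by omega,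
      hc, ← coeff_zero]
    push_cast
    ring
  rw [hlead]
  have hc0 : c ≠ 0 := mul_ne_zero (by exact_mod_cast (by positivity)) hp0
  have hcpos : 0 < padicNorm p c :=
    lt_of_le_of_ne (padicNorm.nonneg _) (padicNorm.nonzero hc0).symm
  have hRlt : padicNorm p R < padicNorm p c := by
    refine padicNorm.sum_lt' (fun k hk => ?_) hcpos
    have hk := Finset.mem_range.1 hk
    have := term_norm_lt p hp3 m (m - k) (by omega) (by omega)
    rw [show m - (m - k) = k by omega,
      show 2 * m + 2 + 2 * (m - k) = 2 * (2 * m + 1) - 2 * k by omega,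
      show 2 * (m - k) + 1 = 2 * m + 1 - 2 * k by omega, Nat.cast_mul] at this
    rw [mul_assoc, mul_assoc, hsign, ← mul_assoc]
    exact this
  have hS : padicNorm p (R + (-1) ^ m * c) = padicNorm p c := by
    rw [padicNorm.add_eq_max_of_ne (by rw [hsign]; exact hRlt.ne), hsign, max_eq_right hRlt.le]
  have hS0 : R + (-1) ^ m * c ≠ 0 := by
    intro h
    rw [h, padicNorm.zero] at hS
    exact hcpos.ne hS
  have hval : padicValRat p (R + (-1) ^ m * c) = padicValRat p c := by
    rw [padicNorm.eq_zpow_of_nonzero hS0, padicNorm.eq_zpow_of_nonzero hc0] at hS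
    exact neg_injective (zpow_right_injective₀ (by linarith) hp1.ne' hS)
  rw [padicValRat.mul (by positivity) hS0, hval, one_div, padicValRat.inv,
    padicValRat.pow, h2, hc, Nat.cast_mul, Nat.cast_mul,
    padicValRat.mul (mul_ne_zero (by norm_num) (mul_ne_zero hmQ hCQ)) hp0,
    padicValRat.mul (by norm_num) (mul_ne_zero hmQ hCQ), padicValRat.mul hmQ hCQ,
    padicValRat.self hp.one_lt, Nat.cast_ofNat, h2,
    padicValRat.of_nat (n := 2 * m + 1), padicValRat.of_nat (n := (2 * m).choose m)]
  ring
end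

section
/- For every integer n ≥ 0, ν_2(P_n(2)) = (n mod 2) − ν_2(n!). -/
lemma padicValNat_two_factorial (j e : ℕ) (he : e < 2) :
    padicValNat 2 (2 * j + e).factorial = padicValNat 2 j.factorial + j := by
  rw [padicValNat_factorial_mul_add j he, padicValNat_factorial_mul]

/-- The valuation of the unsigned summand of index `k = i` in `2^n P_n(2)`, for `n = 2(i + j) + e`,
with the factorial terms moved to the left to avoid subtraction. -/
lemma padicValNat_summand (i j e : ℕ) (he : e < 2) :
    padicValNat 2 ((2 * (i + j) + e).choose i *
      ((2 * (2 * (i + j) + e) - 2 * i).choose (2 * (i + j) + e)) *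
        2 ^ (2 * (i + j) + e - 2 * i)) + padicValNat 2 i.factorial + padicValNat 2 j.factorial
      = i + 3 * j + 2 * e := by
  have h1 : 2 * (2 * (i + j) + e) - 2 * i = 2 * (i + 2 * j + e) := by omega
  have h2 : 2 * (i + j) + e - 2 * i = 2 * j + e := by omega
  rw [h1, h2]
  have c1 := Nat.choose_mul_factorial_mul_factorial (n := 2 * (i + j) + e) (k := i) (by omega)
  have c2 := Nat.choose_mul_factorial_mul_factorial
    (n := 2 * (i + 2 * j + e)) (k := 2 * (i + j) + e) (by omega)
  rw [show 2 * (i + j) + e - i = i + 2 * j + e by omega] at c1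
  rw [show 2 * (i + 2 * j + e) - (2 * (i + j) + e) = 2 * j + e by omega] at c2
  have p1 : (2 * (i + j) + e).choose i ≠ 0 := (Nat.choose_pos (by omega)).ne'
  have p2 : (2 * (i + 2 * j + e)).choose (2 * (i + j) + e) ≠ 0 := (Nat.choose_pos (by omega)).ne'
  have v1 := congrArg (padicValNat 2) c1
  have v2 := congrArg (padicValNat 2) c2
  rw [padicValNat.mul (mul_ne_zero p1 (Nat.factorial_ne_zero _)) (Nat.factorial_ne_zero _),
    padicValNat.mul p1 (Nat.factorial_ne_zero _)] at v1
  rw [padicValNat.mul (mul_ne_zero p2 (Nat.factorial_ne_zero _)) (Nat.factorial_ne_zero _),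
    padicValNat.mul p2 (Nat.factorial_ne_zero _), padicValNat_factorial_mul,
    padicValNat_two_factorial j e he] at v2
  rw [padicValNat.mul (mul_ne_zero p1 p2) (by positivity), padicValNat.mul p1 p2,
    padicValNat.prime_pow]
  omega

/-- Ultrametric bound: a sum of rationals of valuation above `c` vanishes (where `padicValRat` takes
the junk value `0`) or has valuation above `c`. -/
lemma sum_eq_zero_or_lt_padicValRat (F : ℕ → ℚ) (c : ℤ) (m : ℕ)
    (hF : ∀ k < m, c < padicValRat 2 (F k)) :
    ∑ k ∈ Finset.range m, F k = 0 ∨ c < padicValRat 2 (∑ k ∈ Finset.range m, F k) := by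
  induction m with
  | zero => simp
  | succ m ih =>
    rw [Finset.sum_range_succ]
    rcases ih fun k hk => hF k (by omega) with h | h
    · rw [h, zero_add]
      exact Or.inr (hF m (by omega))
    · by_cases h0 : ∑ k ∈ Finset.range m, F k + F m = 0
      · exact Or.inl h0
      · exact Or.inr ((lt_min h (hF m (by omega))).trans_le (padicValRat.min_le_padicValRat_add h0))

theorem stmt7 (n : ℕ) :
    padicValRat 2 (legendreP n (2 : ℚ))
      = ((n % 2 : ℕ) : ℤ) - (padicValNat 2 n.factorial : ℤ) := by
  obtain ⟨m, e, he, rfl⟩ : ∃ m e, e < 2 ∧ n = 2 * m + e :=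
    ⟨n / 2, n % 2, Nat.mod_lt _ two_pos, by omega⟩
  rw [padicValNat_two_factorial m e he]
  have hm : (2 * m + e) / 2 = m := by omega
  have hr : (2 * m + e) % 2 = e := by omega
  unfold legendreP
  rw [hm, hr, Finset.sum_range_succ]
  set n := 2 * m + e with hn
  set T : ℕ → ℚ := fun k => (-1 : ℚ) ^ k * (n.choose k : ℚ) *
    (((2 * n - 2 * k).choose n : ℕ) : ℚ) * 2 ^ (n - 2 * k) with hT
  have hne : ∀ k ≤ m, T k ≠ 0 := fun k hk => by
    have p1 : n.choose k ≠ 0 := (Nat.choose_pos (by omega)).ne'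
    have p2 : (2 * n - 2 * k).choose n ≠ 0 := (Nat.choose_pos (by omega)).ne'
    simp [hT, p1, p2]
  have hval : ∀ i j, i + j = m → padicValRat 2 (T i) + padicValNat 2 i.factorial
      + padicValNat 2 j.factorial = i + 3 * j + 2 * e := by
    rintro i j rfl
    have h := padicValNat_summand i j e he
    rw [← hn] at h
    have hTi : T i = (-1) ^ i *
        ((n.choose i * (2 * n - 2 * i).choose n * 2 ^ (n - 2 * i) : ℕ) : ℚ) := by
      simp only [hT]; push_cast; ring
    have hs : padicValRat 2 (T i) =
        padicValNat 2 (n.choose i * (2 * n - 2 * i).choose n * 2 ^ (n - 2 * i)) := by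
      rw [hTi]
      rcases neg_one_pow_eq_or ℚ i with h | h <;> rw [h]
      · rw [one_mul, padicValRat.of_nat]
      · rw [neg_one_mul, padicValRat.neg, padicValRat.of_nat]
    rw [hs]
    omega
  have hlast : padicValRat 2 (T m) + padicValNat 2 m.factorial = m + 2 * e := by
    simpa using hval m 0 rfl
  have hlt : ∀ k < m, padicValRat 2 (T m) < padicValRat 2 (T k) := by
    intro k hk
    obtain ⟨j, rfl⟩ := Nat.exists_eq_add_of_lt hk
    have h := hval k (j + 1) (by omega)
    have c := congrArg (padicValNat 2) (Nat.add_choose_mul_factorial_mul_factorial k (j + 1))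
    have p : (k + (j + 1)).choose (j + 1) ≠ 0 := (Nat.choose_pos (by omega)).ne'
    rw [padicValNat.mul (mul_ne_zero p (Nat.factorial_ne_zero _)) (Nat.factorial_ne_zero _),
      padicValNat.mul p (Nat.factorial_ne_zero _), ← add_assoc] at c
    -- The gap `2(j + 1) + ν₂(C(m, j + 1))` is positive.
    omega
  obtain ⟨hs0, hsum⟩ : ∑ k ∈ Finset.range m, T k + T m ≠ 0 ∧
      padicValRat 2 (∑ k ∈ Finset.range m, T k + T m) = padicValRat 2 (T m) := by
    by_cases h0 : ∑ k ∈ Finset.range m, T k = 0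
    · rw [h0, zero_add]
      exact ⟨hne m le_rfl, rfl⟩
    have hl := (sum_eq_zero_or_lt_padicValRat T _ m hlt).resolve_left h0
    have hs : T m + ∑ k ∈ Finset.range m, T k ≠ 0 := fun h => by
      rw [eq_neg_of_add_eq_zero_left h, padicValRat.neg] at hl
      exact hl.false
    rw [add_comm]
    exact ⟨hs, padicValRat.add_eq_of_lt hs (hne m le_rfl) h0 hl⟩
  rw [padicValRat.mul (by positivity) hs0, hsum, one_div, padicValRat.inv,
    padicValRat.pow]
  have : padicValRat 2 (2:ℚ) = 1 := by
    exact_mod_cast padicValRat.self (p := 2) (by norm_num)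
  rw [this]
  rw [mul_one]
  omega
end

section
/- Let p ≥ 3 be a prime number and define f(n) := ν_p(P_n(p)) for integers n ≥ 0. Then for all integers n ≥ 0 and 0 ≤ a < p: if a is even, f(pn + a) = f(n) + (n mod 2), and if a is odd, f(pn + a) = f(n) + 1 − (n mod 2). -/
open Nat in
lemma exists_factorial_quot (M j : ℕ) :
    ∃ q : ℕ, (2 * M + 2 * j)! * M ! = q * ((2 * M)! * (M + j)!) ∧ (j = 0 → q = 1) := by
  induction j with
  | zero => exact ⟨1, by simp, fun _ => rfl⟩
  | succ j ih =>
    obtain ⟨q, hq, -⟩ := ih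
    refine ⟨2 * (2 * M + 2 * j + 1) * q, ?_, by simp⟩
    rw [show 2 * M + 2 * (j + 1) = (2 * M + 2 * j) + 1 + 1 by ring, Nat.factorial_succ,
      Nat.factorial_succ, ← add_assoc M j 1, Nat.factorial_succ (M + j)]
    linear_combination (2 * M + 2 * j + 1 + 1) * (2 * M + 2 * j + 1) * hq

open Nat in
/-- Up to the denominator `(2j + e)!`, the coefficient of `x ^ (2j + e)` in `2 ^ n * P_n` is, in
absolute value, an integer multiple of the lowest one, `2 ^ e * n! / (m!) ^ 2`. -/
lemma exists_term_factor (m e k : ℕ) (he : e < 2) (hk : k ≤ m) :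
    ∃ q : ℕ, (2 * m + e).choose k * (2 * (2 * m + e) - 2 * k).choose (2 * m + e)
        * (2 * (m - k) + e)! * m ! ^ 2 = 2 ^ e * (2 * m + e)! * q ∧ (k = m → q = 1) := by
  obtain ⟨j, rfl⟩ := Nat.exists_eq_add_of_le hk
  obtain ⟨q₁, h₁, h₁'⟩ := exists_factorial_quot (k + j + e) j
  obtain ⟨q₂, h₂⟩ : k ! ∣ (k + j)! := Nat.factorial_dvd_factorial (by omega)
  refine ⟨q₁ * q₂, ?_, ?_⟩
  · have c₁ := Nat.choose_mul_factorial_mul_factorial (n := 2 * (k + j) + e) (k := k) (by omega)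
    have c₂ := Nat.choose_mul_factorial_mul_factorial
      (n := 2 * (2 * (k + j) + e) - 2 * k) (k := 2 * (k + j) + e) (by omega)
    have h₃ : (2 * (k + j + e))! * (k + j)! = 2 ^ e * (2 * (k + j) + e)! * (k + j + e)! := by
      interval_cases e
      · simp
      · rw [show 2 * (k + j + 1) = 2 * (k + j) + 1 + 1 by ring, Nat.factorial_succ (2 * (k + j) + 1),
          Nat.factorial_succ (k + j)]
        ring
    rw [show 2 * (k + j) + e - k = k + j + e + j by omega] at c₁
    rw [show 2 * (2 * (k + j) + e) - 2 * k - (2 * (k + j) + e) = 2 * j + e by omega] at c₂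
    rw [show 2 * (k + j + e) + 2 * j = 2 * (2 * (k + j) + e) - 2 * k by omega] at h₁
    rw [show k + j - k = j by omega]
    set C₁ := (2 * (k + j) + e).choose k
    set C₂ := (2 * (2 * (k + j) + e) - 2 * k).choose (2 * (k + j) + e)
    have c : C₁ * C₂ * (2 * j + e)! * k ! * (k + j + e + j)!
        = (2 * (2 * (k + j) + e) - 2 * k)! := by
      rw [← c₂, ← c₁]; ring
    have hpos : 0 < k ! * (k + j + e + j)! * (k + j + e)! := by positivity
    apply Nat.eq_of_mul_eq_mul_right hpos
    linear_combination (k + j)! ^ 2 * (k + j + e)! * c + (k + j)! ^ 2 * h₁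
      + q₁ * (k + j + e + j)! * (k + j)! * (2 * (k + j + e))! * h₂
      + q₁ * (k + j + e + j)! * k ! * q₂ * h₃
  · intro hj
    have hj : j = 0 := by omega
    subst hj
    rw [h₁' rfl, one_mul]
    exact (Nat.eq_of_mul_eq_mul_left (Nat.factorial_pos k) (by simpa using h₂)).symm

open Nat in
lemma padicNorm_pow_div_factorial_lt_one_s8 (p : ℕ) [Fact p.Prime] (hp3 : 3 ≤ p) (j e : ℕ)
    (he : e < 2) (hj : 0 < j) :
    padicNorm p ((p : ℚ) ^ (2 * j) / ((2 * j + e)! : ℕ)) < 1 := by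
  have hp0 : (p : ℚ) ≠ 0 := by positivity
  have hf : (((2 * j + e)! : ℕ) : ℚ) ≠ 0 := by positivity
  have h := sub_one_mul_padicValNat_factorial (p := p) (2 * j + e)
  have h2 : 2 * padicValNat p (2 * j + e)! ≤ 2 * j + e :=
    calc _ ≤ (p - 1) * padicValNat p (2 * j + e)! := Nat.mul_le_mul_right _ (by omega)
      _ ≤ _ := by omega
  rw [padicNorm.eq_zpow_of_nonzero (by positivity), padicValRat.div (by positivity) hf,
    padicValRat.pow, padicValRat.self (by omega), padicValRat.of_nat]
  apply zpow_lt_one_of_neg₀ (by exact_mod_cast (by omega : 1 < p))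
  omega

lemma padicNorm_two (p : ℕ) [Fact p.Prime] (hp3 : 3 ≤ p) : padicNorm p (2 : ℚ) = 1 := by
  have := (padicNorm.nat_eq_one_iff (p := p) 2).2 (fun h => by
    have := Nat.le_of_dvd (by norm_num) h
    omega)
  exact_mod_cast this

open Nat in
/-- The lowest-degree term of `P_n(p)` has strictly smaller valuation than all the others. -/
lemma padicNorm_legendreP (p : ℕ) [Fact p.Prime] (hp3 : 3 ≤ p) (m e : ℕ) (he : e < 2) :
    padicNorm p (legendreP (2 * m + e) p)
      = padicNorm p (((2 * m + e)! : ℕ) * (p : ℚ) ^ e / (m ! : ℕ) ^ 2) := by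
  set L : ℚ := ((2 * m + e)! : ℕ) * (p : ℚ) ^ e / (m ! : ℕ) ^ 2 with hL
  have hL0 : L ≠ 0 := by positivity
  have h2 := padicNorm_two p hp3
  have hLpos : 0 < padicNorm p L :=
    lt_of_le_of_ne (padicNorm.nonneg _) (Ne.symm (padicNorm.nonzero hL0))
  have hpow : ∀ i : ℕ, padicNorm p ((2 : ℚ) ^ i) = 1 := fun i => by
    induction i with
    | zero => simp
    | succ i ih => rw [pow_succ, padicNorm.mul, ih, h2, one_mul]
  have hsgn : ∀ i : ℕ, padicNorm p ((-1 : ℚ) ^ i) = 1 := fun i => by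
    rcases neg_one_pow_eq_or ℚ i with h | h <;> simp [h]
  have key : ∀ k ≤ m, ∃ q : ℕ, (-1 : ℚ) ^ k * ((2 * m + e).choose k : ℚ)
      * (((2 * (2 * m + e) - 2 * k).choose (2 * m + e) : ℕ) : ℚ) * (p : ℚ) ^ (2 * m + e - 2 * k)
      = (-1) ^ k * 2 ^ e * L * (q * ((p : ℚ) ^ (2 * (m - k)) / ((2 * (m - k) + e)! : ℕ)))
      ∧ (k = m → q = 1) := fun k hk => by
    obtain ⟨q, hq, hq1⟩ := exists_term_factor m e k he hk
    refine ⟨q, ?_, hq1⟩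
    have hq' : ((2 * m + e).choose k : ℚ)
        * (((2 * (2 * m + e) - 2 * k).choose (2 * m + e) : ℕ) : ℚ)
        * ((2 * (m - k) + e)! : ℕ) * (m ! : ℕ) ^ 2 = 2 ^ e * ((2 * m + e)! : ℕ) * q := by
      exact_mod_cast hq
    rw [show 2 * m + e - 2 * k = 2 * (m - k) + e by omega, hL, pow_add]
    have hf : (((2 * (m - k) + e)! : ℕ) : ℚ) ≠ 0 := by positivity
    have hm : ((m ! : ℕ) : ℚ) ≠ 0 := by positivity
    field_simp
    linear_combination hq'
  unfold legendreP
  rw [padicNorm.mul, padicNorm.div, hpow, show (2 * m + e) / 2 = m by omega,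
    Finset.sum_range_succ]
  simp only [padicNorm.one, div_one, one_mul]
  set A := ∑ k ∈ Finset.range m, (-1 : ℚ) ^ k * ((2 * m + e).choose k : ℚ)
      * (((2 * (2 * m + e) - 2 * k).choose (2 * m + e) : ℕ) : ℚ) * (p : ℚ) ^ (2 * m + e - 2 * k)
  have hA : padicNorm p A < padicNorm p L := by
    apply padicNorm.sum_lt' _ hLpos
    intro k hk
    rw [Finset.mem_range] at hk
    obtain ⟨q, hq, -⟩ := key k hk.le
    rw [hq, padicNorm.mul, padicNorm.mul, padicNorm.mul, hsgn, hpow, padicNorm.mul]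
    have h1 := padicNorm_pow_div_factorial_lt_one_s8 p hp3 (m - k) e he (by omega)
    have h3 : padicNorm p (q : ℚ) ≤ 1 := padicNorm.of_nat q
    have h4 := padicNorm.nonneg (p := p) (q : ℚ)
    have h5 := padicNorm.nonneg (p := p) ((p : ℚ) ^ (2 * (m - k)) / ((2 * (m - k) + e)! : ℕ))
    rw [one_mul, one_mul]
    apply mul_lt_of_lt_one_right hLpos
    exact (mul_le_of_le_one_left h5 h3).trans_lt h1
  obtain ⟨q, hq, hq1⟩ := key m le_rfl
  rw [hq, hq1 rfl]
  -- `(2 * 0 + e)! = 1` because `e ≤ 1`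
  have he1 : e ! = 1 := by interval_cases e <;> rfl
  have hB : padicNorm p ((-1) ^ m * 2 ^ e * L
      * (((1 : ℕ) : ℚ) * ((p : ℚ) ^ (2 * (m - m)) / ((2 * (m - m) + e)! : ℕ))))
      = padicNorm p L := by
    rw [padicNorm.mul, padicNorm.mul, padicNorm.mul, hsgn, hpow, Nat.sub_self, mul_zero, zero_add,
      he1]
    simp
  rw [padicNorm.add_eq_max_of_ne (by rw [hB]; exact hA.ne), hB, max_eq_right hA.le]

open Nat in
lemma padicValRat_legendreP (p : ℕ) [Fact p.Prime] (hp3 : 3 ≤ p) (n : ℕ) :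
    padicValRat p (legendreP n p)
      = (n % 2 : ℕ) + (padicValNat p n ! : ℤ) - 2 * (padicValNat p (n / 2)! : ℤ) := by
  have h := padicNorm_legendreP p hp3 (n / 2) (n % 2) (Nat.mod_lt _ (by norm_num))
  rw [Nat.div_add_mod] at h
  set L : ℚ := (n ! : ℕ) * (p : ℚ) ^ (n % 2) / ((n / 2)! : ℕ) ^ 2 with hL
  have hp0 : (p : ℚ) ≠ 0 := by positivity
  have hL0 : L ≠ 0 := by positivity
  have hP0 : legendreP n p ≠ 0 := fun h0 => by
    rw [h0, padicNorm.zero] at h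
    exact padicNorm.nonzero hL0 h.symm
  rw [padicNorm.eq_zpow_of_nonzero hL0, padicNorm.eq_zpow_of_nonzero hP0] at h
  have h' := zpow_right_injective₀ (by positivity)
    (by exact_mod_cast (by omega : p ≠ 1)) h
  have hn : ((n ! : ℕ) : ℚ) ≠ 0 := by positivity
  have hm : (((n / 2)! : ℕ) : ℚ) ≠ 0 := by positivity
  rw [neg_inj.1 h', hL, padicValRat.div (by positivity) (by positivity),
    padicValRat.mul hn (by positivity), padicValRat.pow, padicValRat.pow,
    padicValRat.self (by omega), padicValRat.of_nat, padicValRat.of_nat]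
  push_cast
  ring

theorem stmt8 (p : ℕ) (hp : p.Prime) (hp3 : 3 ≤ p) (n a : ℕ) (ha : a < p) :
    (Even a →
      padicValRat p (legendreP (p * n + a) (p : ℚ))
        = padicValRat p (legendreP n (p : ℚ)) + ((n % 2 : ℕ) : ℤ)) ∧
    (Odd a →
      padicValRat p (legendreP (p * n + a) (p : ℚ))
        = padicValRat p (legendreP n (p : ℚ)) + 1 - ((n % 2 : ℕ) : ℤ)) := by
  have : Fact p.Prime := ⟨hp⟩
  have hfac : ∀ N, padicValNat p N.factorial
      = padicValNat p (N / p).factorial + N / p := fun N => by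
    conv_lhs => rw [← Nat.div_add_mod N p]
    rw [padicValNat_factorial_mul_add _ (Nat.mod_lt _ hp.pos), padicValNat_factorial_mul]
  have hd : (p * n + a) / p = n := by
    rw [Nat.mul_add_div hp.pos, Nat.div_eq_of_lt ha, add_zero]
  have hd2 : (p * n + a) / 2 / p = n / 2 := by
    rw [Nat.div_div_eq_div_mul, mul_comm 2 p, ← Nat.div_div_eq_div_mul, hd]
  have hpar : (p * n + a) % 2 = (n + a) % 2 := by
    have : p % 2 = 1 := hp.eq_two_or_odd.resolve_left (by omega)
    simp [Nat.add_mod, Nat.mul_mod, this]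
  rw [padicValRat_legendreP p hp3, padicValRat_legendreP p hp3, hfac (p * n + a),
    hfac ((p * n + a) / 2), hd, hd2, hpar]
  constructor
  · rintro ⟨b, rfl⟩
    omega
  · rintro ⟨b, rfl⟩
    omega
end

section
/- Define a(n) := Σ_{i=0}^n C(n,i)·C(n+i,i) (the central Delannoy numbers) and b(n) := ν_3(a(n)). Then for every integer i ≥ 0: if i ≡ 0 or 2 (mod 3), then b(i) = b(⌊i/3⌋) + (⌊i/3⌋ mod 2), and if i ≡ 1 (mod 3), then b(i) = b(⌊i/9⌋) + 1. -/
/-!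
The central Delannoy number `a(n)` is the coefficient of `X ^ n` in `(1 + 3 X + 2 X²) ^ n`, so
`a(n) = ∑_{2k ≤ n} n! / (k!² (n - 2k)!) · 2 ^ k · 3 ^ (n - 2k)`. The powers of 3 make the term with
`k = ⌊n/2⌋` the only one of minimal 3-adic valuation, because `ν₃(j!) ≤ (j - 1) / 2` for `j ≥ 1`
(`padicValNat_term_lt`). Hence `b(n) = ν₃(n!) - 2 ν₃(⌊n/2⌋!) + (n mod 2)`
(`padicValNat_centralDelannoy`).

Legendre's relation `ν₃(n!) = ⌊n/3⌋ + ν₃(⌊n/3⌋!)` turns this into the single recursion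
`b(n) = b(⌊n/3⌋) + (n mod 2)` (`padicValNat_centralDelannoy_div_three`). For `n ≡ 0, 2 (mod 3)` the
parities of `n` and `⌊n/3⌋` agree; for `n ≡ 1 (mod 3)` they are opposite, and applying the recursion
twice contributes exactly 1.
-/

/-- The central Delannoy numbers `a(n) = ∑_{i=0}^n C(n,i) C(n+i,i)`. -/
def centralDelannoy (n : ℕ) : ℕ :=
  ∑ i ∈ Finset.range (n + 1), n.choose i * (n + i).choose i

open Polynomial in
/-- The defining sum comes from expanding `(1 + 2 X) ^ n = ((1 + X) + X) ^ n` in the factorization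
`1 + 3 X + 2 X² = (1 + X) (1 + 2 X)`. -/
lemma centralDelannoy_eq_coeff (n : ℕ) :
    centralDelannoy n = ((1 + C 3 * X + C 2 * X ^ 2 : ℕ[X]) ^ n).coeff n := by
  have h : (1 + C 3 * X + C 2 * X ^ 2 : ℕ[X]) = (1 + X) * ((1 + X) + X) := by
    simp only [map_ofNat]
    ring
  rw [h, mul_pow, add_pow (1 + X) X, Finset.mul_sum, finsetSum_coeff, centralDelannoy]
  refine Finset.sum_congr rfl fun i hi => ?_
  have hi : i ≤ n := by simpa [Nat.lt_succ_iff] using hi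
  have e : ((1 + X) ^ n * ((1 + X) ^ i * X ^ (n - i) * (n.choose i : ℕ[X])) : ℕ[X])
      = X ^ (n - i) * (C (n.choose i) * (1 + X) ^ (n + i)) := by
    rw [pow_add, ← map_natCast C, Nat.cast_id]
    ring
  rw [e, coeff_X_pow_mul', if_pos (Nat.sub_le n i), coeff_C_mul, coeff_one_add_X_pow,
    Nat.sub_sub_self hi, Nat.cast_id]

/-- The summand `n! / (k!² (n - 2k)!) · 2 ^ k · 3 ^ (n - 2k)` of the expansion of
`(1 + 3 X + 2 X²) ^ n`; it is meaningful only for `2 * k ≤ n`. -/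
def delannoyTerm (n k : ℕ) : ℕ :=
  n.choose k * (n - k).choose (n - 2 * k) * 2 ^ k * 3 ^ (n - 2 * k)

open Polynomial in
lemma centralDelannoy_eq_sum (n : ℕ) :
    centralDelannoy n = ∑ k ∈ Finset.range (n / 2 + 1), delannoyTerm n k := by
  have hc (N d : ℕ) : ((1 + C 3 * X : ℕ[X]) ^ N).coeff d = N.choose d * 3 ^ d := by
    have : (1 + C 3 * X : ℕ[X]) ^ N = ((1 + X) ^ N).comp (C 3 * X) := by simp
    rw [this, comp_C_mul_X_coeff, coeff_one_add_X_pow, Nat.cast_id]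
  rw [centralDelannoy_eq_coeff, add_comm, add_pow, finsetSum_coeff]
  have e (k : ℕ) : (((C 2 * X ^ 2) ^ k * (1 + C 3 * X) ^ (n - k) * (n.choose k : ℕ[X])).coeff n)
      = if 2 * k ≤ n then delannoyTerm n k else 0 := by
    have : ((C 2 * X ^ 2) ^ k * (1 + C 3 * X) ^ (n - k) * (n.choose k : ℕ[X]))
        = X ^ (2 * k) * (C (2 ^ k * n.choose k) * (1 + C 3 * X) ^ (n - k)) := by
      rw [← map_natCast C, Nat.cast_id, mul_pow, ← pow_mul, map_mul, map_pow]
      ring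
    rw [this, coeff_X_pow_mul', coeff_C_mul, hc, delannoyTerm]
    split_ifs
    · ring
    · rfl
  simp_rw [e]
  rw [← Finset.sum_filter]
  refine Finset.sum_congr ?_ fun _ _ => rfl
  ext k
  simp only [Finset.mem_filter, Finset.mem_range]
  omega

lemma delannoyTerm_mul_factorial {n k : ℕ} (hk : 2 * k ≤ n) :
    delannoyTerm n k * (k.factorial * k.factorial * (n - 2 * k).factorial)
      = n.factorial * 2 ^ k * 3 ^ (n - 2 * k) := by
  have h1 := Nat.choose_mul_factorial_mul_factorial (show k ≤ n by omega)
  have h2 := Nat.choose_mul_factorial_mul_factorial (show n - 2 * k ≤ n - k by omega)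
  rw [show n - k - (n - 2 * k) = k by omega] at h2
  rw [delannoyTerm, ← h1, ← h2]
  ring

lemma delannoyTerm_ne_zero {n k : ℕ} (hk : 2 * k ≤ n) : delannoyTerm n k ≠ 0 := by
  intro h
  have := delannoyTerm_mul_factorial hk
  rw [h, zero_mul] at this
  have : 0 < n.factorial * 2 ^ k * 3 ^ (n - 2 * k) := by positivity
  omega

lemma padicValNat_delannoyTerm {n k : ℕ} (hk : 2 * k ≤ n) :
    padicValNat 3 (delannoyTerm n k) + 2 * padicValNat 3 k.factorial
        + padicValNat 3 (n - 2 * k).factorial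
      = padicValNat 3 n.factorial + (n - 2 * k) := by
  have h := congrArg (padicValNat 3) (delannoyTerm_mul_factorial hk)
  have h2 : padicValNat 3 (2 ^ k) = 0 :=
    padicValNat.eq_zero_of_not_dvd fun hd => by
      have := Nat.prime_three.dvd_of_dvd_pow hd
      omega
  rw [padicValNat.mul (delannoyTerm_ne_zero hk) (by positivity),
    padicValNat.mul (by positivity) (by positivity),
    padicValNat.mul (by positivity) (by positivity),
    padicValNat.mul (by positivity) (by positivity),
    padicValNat.mul (by positivity) (by positivity), h2, padicValNat.prime_pow] at h
  omega

lemma padicValNat_factorial_mono {k m : ℕ} (h : k ≤ m) :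
    padicValNat 3 k.factorial ≤ padicValNat 3 m.factorial :=
  (padicValNat_dvd_iff_le m.factorial_ne_zero).1
    (pow_padicValNat_dvd.trans (Nat.factorial_dvd_factorial h))

lemma padicValNat_delannoyTerm_half (n : ℕ) :
    padicValNat 3 (delannoyTerm n (n / 2)) + 2 * padicValNat 3 (n / 2).factorial
      = padicValNat 3 n.factorial + n % 2 := by
  have h := padicValNat_delannoyTerm (show 2 * (n / 2) ≤ n by omega)
  rw [show n - 2 * (n / 2) = n % 2 by omega] at h
  -- the leftover factorial is `0!` or `1!`
  have h1 : padicValNat 3 (n % 2).factorial = 0 := by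
    rcases Nat.mod_two_eq_zero_or_one n with h | h <;> simp [h]
  omega

/-- With `j = n - 2k ≥ 2`, the gain `j - ν₃(j!)` is at least `(j + 1) / 2 > 1`, which exceeds the
factor `3 ^ (n % 2)` present in the last term. -/
lemma padicValNat_term_lt {n k : ℕ} (hk : k < n / 2) :
    padicValNat 3 (delannoyTerm n (n / 2)) < padicValNat 3 (delannoyTerm n k) := by
  have h := padicValNat_delannoyTerm_half n
  have h' := padicValNat_delannoyTerm (show 2 * k ≤ n by omega)
  have hm := padicValNat_factorial_mono hk.le
  have hl := sub_one_mul_padicValNat_factorial_lt_of_ne_zero (p := 3)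
    (show n - 2 * k ≠ 0 by omega)
  omega

/-- The last term of the expansion has strictly smallest valuation, so it determines that of the
sum. -/
lemma padicValNat_centralDelannoy (n : ℕ) :
    padicValNat 3 (centralDelannoy n) + 2 * padicValNat 3 (n / 2).factorial
      = padicValNat 3 n.factorial + n % 2 := by
  rw [← padicValNat_delannoyTerm_half n, centralDelannoy_eq_sum, Finset.sum_range_succ]
  congr 1
  set t := delannoyTerm n (n / 2) with ht
  set v := padicValNat 3 t with hv
  have ht0 : t ≠ 0 := delannoyTerm_ne_zero (by omega)
  have hS : 3 ^ (v + 1) ∣ ∑ k ∈ Finset.range (n / 2), delannoyTerm n k :=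
    Finset.dvd_sum fun k hk => (padicValNat_dvd_iff _ _).2
      (Or.inr (padicValNat_term_lt (Finset.mem_range.1 hk)))
  have hne : ∑ k ∈ Finset.range (n / 2), delannoyTerm n k + t ≠ 0 := by omega
  apply le_antisymm
  · by_contra! hlt
    have hd := (padicValNat_dvd_iff_le (p := 3) hne).2 hlt
    have := (padicValNat_dvd_iff_le (p := 3) ht0).1 ((Nat.dvd_add_right hS).1 hd)
    omega
  · exact (padicValNat_dvd_iff_le hne).1
      (dvd_add ((pow_dvd_pow 3 v.le_succ).trans hS) pow_padicValNat_dvd)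

lemma padicValNat_factorial_div_three (n : ℕ) :
    padicValNat 3 n.factorial = padicValNat 3 (n / 3).factorial + n / 3 := by
  rw [← padicValNat_mul_div_factorial, padicValNat_factorial_mul]

lemma padicValNat_centralDelannoy_div_three (n : ℕ) :
    padicValNat 3 (centralDelannoy n) = padicValNat 3 (centralDelannoy (n / 3)) + n % 2 := by
  have h := padicValNat_centralDelannoy n
  have h' := padicValNat_centralDelannoy (n / 3)
  have hn := padicValNat_factorial_div_three n
  have hm := padicValNat_factorial_div_three (n / 2)
  rw [show n / 2 / 3 = n / 3 / 2 by omega] at hm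
  omega

theorem stmt15 (i : ℕ) :
    (i % 3 = 0 ∨ i % 3 = 2 →
      padicValNat 3 (centralDelannoy i)
        = padicValNat 3 (centralDelannoy (i / 3)) + (i / 3) % 2) ∧
    (i % 3 = 1 →
      padicValNat 3 (centralDelannoy i)
        = padicValNat 3 (centralDelannoy (i / 9)) + 1) := by
  have h := padicValNat_centralDelannoy_div_three i
  have h' := padicValNat_centralDelannoy_div_three (i / 3)
  rw [show i / 3 / 3 = i / 9 by omega] at h'
  constructor <;> intro hi <;> omega
end

section
/- Let p ≥ 3 be a prime number. Then for every integer n ≥ 0, (p−1)·ν_p(M_n(p)) = 2·s_p(⌊n/2⌋) − s_p(n) + (n mod 2)·p, where M_n(x) := Σ_{k=0}^n C(n,k)^2 (x−1)^k and s_p(n) denotes the sum of the base-p digits of n. -/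
/-!
Reading `M_n(1 + y)` as the coefficient of `t ^ n` in
`((1 + y t) (1 + t)) ^ n = ((1 + (1 + y) t) + y t ^ 2) ^ n` gives
`M_n(x) = ∑_j C(n,j) C(n-j,n-2j) x ^ (n-2j) (x-1) ^ j`, where the product of the two binomial
coefficients is `n! / (j! ^ 2 (n-2j)!)` (`ciglerMNat_succ`).

At `x = p` the term with `j = m := ⌊n/2⌋` has strictly smaller `p`-adic valuation than all the
others. With `n = 2m + r` and `i = m - j > 0`, the valuation of the `j`-th term exceeds that of the
`m`-th one by at least `2i - ν_p((2i+r)!)`, and Legendre's formula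
`(p-1) ν_p(k!) = k - s_p(k)` together with `p ≥ 3` bounds `ν_p((2i+r)!)` by `i`
(`two_mul_padicValNat_factorial_le`). Hence `ν_p(M_n(p)) = ν_p(n!) - 2 ν_p(m!) + r`, and Legendre's formula
turns this into digit sums.
-/

/-- Cigler's polynomial `M_n` evaluated at the natural number `x` (as a natural number):
`M_n(x) = ∑_{k=0}^n C(n,k)^2 (x-1)^k`. -/
def ciglerMNat (n : ℕ) (x : ℕ) : ℕ :=
  ∑ k ∈ Finset.range (n + 1), n.choose k ^ 2 * (x - 1) ^ k

open Polynomial in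
theorem coeff_one_add_C_mul_X_pow (a n k : ℕ) :
    ((1 + C a * X : ℕ[X]) ^ n).coeff k = n.choose k * a ^ k := by
  have h : (1 + C a * X : ℕ[X]) ^ n = ((1 + X : ℕ[X]) ^ n).comp (C a * X) := by simp
  rw [h, comp_C_mul_X_coeff, coeff_one_add_X_pow]
  simp

/-- The `j`-th term in the expansion of `M_n(1 + y)` in powers of `1 + y` and `y`;
meaningful for `2 * j ≤ n`. -/
def ciglerTerm (n y j : ℕ) : ℕ :=
  n.choose j * (n - j).choose (n - 2 * j) * (1 + y) ^ (n - 2 * j) * y ^ j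

/-- Both sides are the coefficient of `X ^ n` in `((1 + y X) (1 + X)) ^ n`. -/
theorem ciglerMNat_succ (n y : ℕ) :
    ciglerMNat n (1 + y) = ∑ j ∈ Finset.range (n / 2 + 1), ciglerTerm n y j := by
  open Polynomial in
  have key : (1 + C y * X : ℕ[X]) ^ n * (1 + X) ^ n
      = ((C y * X ^ 2) + (1 + C (1 + y) * X)) ^ n := by
    rw [← mul_pow]
    congr 1
    simp only [C_add, C_1]
    ring
  have hl : ciglerMNat n (1 + y)
      = ((1 + Polynomial.C y * Polynomial.X) ^ n * (1 + Polynomial.X) ^ n).coeff n := by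
    simp only [Polynomial.coeff_mul, coeff_one_add_C_mul_X_pow, Polynomial.coeff_one_add_X_pow,
      Finset.Nat.sum_antidiagonal_eq_sum_range_succ_mk]
    unfold ciglerMNat
    refine Finset.sum_congr rfl fun k hk => ?_
    rw [Nat.choose_symm (by simpa [Nat.lt_succ_iff] using hk), Nat.add_sub_cancel_left, Nat.cast_id]
    ring
  rw [hl, key, add_pow, Polynomial.finsetSum_coeff]
  have hsub : Finset.range (n / 2 + 1) ⊆ Finset.range (n + 1) := by
    intro j
    simp only [Finset.mem_range]
    omega
  have hterm : ∀ j : ℕ, ((Polynomial.C y * Polynomial.X ^ 2) ^ j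
      * (1 + Polynomial.C (1 + y) * Polynomial.X) ^ (n - j) * (n.choose j : Polynomial ℕ)).coeff n
      = if 2 * j ≤ n then ciglerTerm n y j else 0 := by
    intro j
    have e : (Polynomial.C y * Polynomial.X ^ 2) ^ j
      * (1 + Polynomial.C (1 + y) * Polynomial.X) ^ (n - j) * (n.choose j : Polynomial ℕ)
      = Polynomial.C (y ^ j * n.choose j) *
        ((1 + Polynomial.C (1 + y) * Polynomial.X) ^ (n - j) * Polynomial.X ^ (2 * j)) := by
      have hc : (n.choose j : Polynomial ℕ) = Polynomial.C (n.choose j) := by simp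
      rw [hc, Polynomial.C_mul, Polynomial.C_pow, pow_mul, mul_pow]
      ring
    rw [e, Polynomial.coeff_C_mul, Polynomial.coeff_mul_X_pow', coeff_one_add_C_mul_X_pow]
    unfold ciglerTerm
    split_ifs
    · ring
    · simp
  rw [← Finset.sum_subset hsub]
  · refine Finset.sum_congr rfl fun j hj => ?_
    rw [hterm, if_pos]
    have := Finset.mem_range.1 hj
    omega
  · intro j _ hj
    rw [hterm, if_neg]
    simp only [Finset.mem_range] at hj
    omega

theorem ciglerTerm_mul_factorial (n y j : ℕ) (hj : 2 * j ≤ n) :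
    ciglerTerm n y j * (j.factorial ^ 2 * (n - 2 * j).factorial)
      = n.factorial * ((1 + y) ^ (n - 2 * j) * y ^ j) := by
  have h1 := Nat.choose_mul_factorial_mul_factorial (n := n) (k := j) (by omega)
  have h2 := Nat.choose_mul_factorial_mul_factorial (n := n - j) (k := n - 2 * j) (by omega)
  have e : n - j - (n - 2 * j) = j := by omega
  rw [e] at h2
  rw [← h1, ← h2]
  unfold ciglerTerm
  ring

theorem ciglerTerm_pos (n y j : ℕ) (hy : 0 < y) (hj : 2 * j ≤ n) : 0 < ciglerTerm n y j := by
  unfold ciglerTerm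
  have h1 : 0 < n.choose j := Nat.choose_pos (by omega)
  have h2 : 0 < (n - j).choose (n - 2 * j) := Nat.choose_pos (by omega)
  positivity

theorem padicValNat_ciglerTerm (p n y j : ℕ) [hp : Fact p.Prime] (hy : 1 + y = p) (hy0 : 0 < y)
    (hj : 2 * j ≤ n) :
    padicValNat p (ciglerTerm n y j) + 2 * padicValNat p j.factorial
        + padicValNat p (n - 2 * j).factorial
      = padicValNat p n.factorial + (n - 2 * j) := by
  have h := congrArg (padicValNat p) (ciglerTerm_mul_factorial n y j hj)
  have hT := (ciglerTerm_pos n y j hy0 hj).ne'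
  have hy1 : padicValNat p y = 0 :=
    padicValNat.eq_zero_of_not_dvd (Nat.not_dvd_of_pos_of_lt hy0 (by omega))
  have f1 := j.factorial_ne_zero
  have f2 := (n - 2 * j).factorial_ne_zero
  have f3 := n.factorial_ne_zero
  have hp0 := hp.out.ne_zero
  rw [hy, padicValNat.mul hT (mul_ne_zero (pow_ne_zero _ f1) f2),
    padicValNat.mul (pow_ne_zero _ f1) f2,
    padicValNat.mul f3 (mul_ne_zero (pow_ne_zero _ hp0) (pow_ne_zero _ hy0.ne')),
    padicValNat.mul (pow_ne_zero _ hp0) (pow_ne_zero _ hy0.ne'),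
    padicValNat.pow, padicValNat.pow, padicValNat.pow, hy1, padicValNat_self] at h
  omega

theorem two_mul_padicValNat_factorial_le (p k : ℕ) [hp : Fact p.Prime] (hp3 : 3 ≤ p) (hk : 0 < k) :
    2 * padicValNat p k.factorial ≤ k - 1 := by
  have h := sub_one_mul_padicValNat_factorial (p := p) k
  have hs : 0 < (Nat.digits p k).sum := by
    by_contra h0
    have hz : ∀ d ∈ Nat.digits p k, d = 0 := List.sum_eq_zero_iff.1 (by omega)
    exact Nat.getLast_digit_ne_zero p hk.ne' (hz _ (List.getLast_mem _))
  have : 2 * padicValNat p k.factorial ≤ (p - 1) * padicValNat p k.factorial :=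
    Nat.mul_le_mul_right _ (by omega)
  omega

theorem padicValNat_ciglerMNat (p n : ℕ) [hp : Fact p.Prime] (hp3 : 3 ≤ p) :
    padicValNat p (ciglerMNat n p) + 2 * padicValNat p (n / 2).factorial
      = padicValNat p n.factorial + n % 2 := by
  obtain ⟨y, rfl⟩ : ∃ y, p = 1 + y := ⟨p - 1, by omega⟩
  have hy0 : 0 < y := by omega
  have hm := padicValNat_ciglerTerm (1 + y) n y (n / 2) rfl hy0 (by omega)
  -- The remaining factorial is `0!` or `1!`.
  have hr : padicValNat (1 + y) (n - 2 * (n / 2)).factorial = 0 := by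
    have : n - 2 * (n / 2) = 0 ∨ n - 2 * (n / 2) = 1 := by omega
    rcases this with h | h <;> simp [h]
  have hTm := (ciglerTerm_pos n y (n / 2) hy0 (by omega)).ne'
  have hrest : (1 + y) ^ (padicValNat (1 + y) (ciglerTerm n y (n / 2)) + 1)
      ∣ ∑ j ∈ Finset.range (n / 2), ciglerTerm n y j := by
    refine Finset.dvd_sum fun j hj => ?_
    have hj := Finset.mem_range.1 hj
    have hTj := (ciglerTerm_pos n y j hy0 (by omega)).ne'
    rw [padicValNat_dvd_iff_le hTj]
    have h1 := padicValNat_ciglerTerm (1 + y) n y j rfl hy0 (by omega)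
    have h2 := two_mul_padicValNat_factorial_le (1 + y) (n - 2 * j) hp3 (by omega)
    have h3 : padicValNat (1 + y) j.factorial ≤ padicValNat (1 + y) (n / 2).factorial :=
      (padicValNat_dvd_iff_le (Nat.factorial_ne_zero _)).1
        (pow_padicValNat_dvd.trans (Nat.factorial_dvd_factorial hj.le))
    omega
  have hM : padicValNat (1 + y) (ciglerMNat n (1 + y))
      = padicValNat (1 + y) (ciglerTerm n y (n / 2)) := by
    rw [ciglerMNat_succ, Finset.sum_range_succ]
    set S := ∑ j ∈ Finset.range (n / 2), ciglerTerm n y j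
    set T := ciglerTerm n y (n / 2)
    have hne : S + T ≠ 0 := by omega
    apply le_antisymm
    · by_contra! hlt
      have h1 : (1 + y) ^ (padicValNat (1 + y) T + 1) ∣ S + T :=
        (padicValNat_dvd_iff_le hne).2 hlt
      exact pow_succ_padicValNat_not_dvd hTm ((Nat.dvd_add_right hrest).1 h1)
    · exact (padicValNat_dvd_iff_le hne).1
        (dvd_add ((pow_dvd_pow _ (Nat.le_succ _)).trans hrest) pow_padicValNat_dvd)
  omega

theorem stmt17 (p : ℕ) (hp : p.Prime) (hp3 : 3 ≤ p) (n : ℕ) :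
    ((p : ℤ) - 1) * (padicValNat p (ciglerMNat n p) : ℤ)
      = 2 * ((Nat.digits p (n / 2)).sum : ℤ) - ((Nat.digits p n).sum : ℤ)
        + ((n % 2 : ℕ) : ℤ) * (p : ℤ) := by
  have : Fact p.Prime := ⟨hp⟩
  have legendre : ∀ k : ℕ, ((p : ℤ) - 1) * (padicValNat p k.factorial : ℤ)
      = k - ((Nat.digits p k).sum : ℤ) := by
    intro k
    have h := sub_one_mul_padicValNat_factorial (p := p) k
    have h' := congrArg (Nat.cast : ℕ → ℤ) h
    rwa [Nat.cast_mul, Nat.cast_sub hp.one_le, Nat.cast_sub (Nat.digit_sum_le p k),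
      Nat.cast_one] at h'
  have h : (padicValNat p (ciglerMNat n p) : ℤ) + 2 * (padicValNat p (n / 2).factorial : ℤ)
      = (padicValNat p n.factorial : ℤ) + ((n % 2 : ℕ) : ℤ) := by
    exact_mod_cast padicValNat_ciglerMNat p n hp3
  have hn : (n : ℤ) = 2 * ((n / 2 : ℕ) : ℤ) + ((n % 2 : ℕ) : ℤ) := by omega
  linear_combination ((p : ℤ) - 1) * h + legendre n - 2 * legendre (n / 2) + hn
end

section
/- For all integers m ≥ 1 and 1 ≤ j ≤ m, the rational number C(2m, m−j)·C(2m+2j, 2m)·(2j)! / C(2m, m) is a (nonzero) integer, where C(a,b) denotes the binomial coefficient. -/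
/-!
Writing every binomial coefficient through factorials, the quotient equals
`(m! / (m - j)!) * ((2m + 2j)! / (m + j)!) / ((2m)! / m!)`. The first factor is the falling
factorial of `m` of length `j`. Since `(2k + 2)! / (k + 1)! = 2 (2k + 1) * ((2k)! / k!)`, the
remaining ratio telescopes to `∏ i < j, 2 (2 (m + i) + 1)`
(`factorial_two_mul_add_mul_factorial`), so the quotient is a product of positive integers.
-/

/-- The ratio of `(2k)! / k!` at `k = m + j` to its value at `k = m`, cleared of denominators. -/
lemma factorial_two_mul_add_mul_factorial (m j : ℕ) :
    (2 * m + 2 * j).factorial * m.factorial =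
      (m + j).factorial * (2 * m).factorial * ∏ i ∈ Finset.range j, 2 * (2 * (m + i) + 1) := by
  induction j with
  | zero => simp [mul_comm]
  | succ j ih =>
    rw [Finset.prod_range_succ, show 2 * m + 2 * (j + 1) = 2 * m + 2 * j + 1 + 1 by ring,
      Nat.factorial_succ, Nat.factorial_succ, ← add_assoc m j 1, Nat.factorial_succ (m + j)]
    linear_combination (2 * m + 2 * j + 1 + 1) * (2 * m + 2 * j + 1) * ih

theorem stmt18 (m j : ℕ) (hm : 1 ≤ m) (hj1 : 1 ≤ j) (hjm : j ≤ m) :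
    ∃ b : ℤ, b ≠ 0 ∧
      (((2 * m).choose (m - j) : ℚ) * ((2 * m + 2 * j).choose (2 * m) : ℚ)
          * ((2 * j).factorial : ℚ)) / ((2 * m).choose m : ℚ) = (b : ℚ) := by
  have hprod : 0 < ∏ i ∈ Finset.range j, 2 * (2 * (m + i) + 1) :=
    Finset.prod_pos fun i _ => by positivity
  have hdesc : 0 < m.descFactorial j := Nat.descFactorial_pos.2 hjm
  refine ⟨((m.descFactorial j * ∏ i ∈ Finset.range j, 2 * (2 * (m + i) + 1) : ℕ) : ℤ),
    by exact_mod_cast (Nat.mul_pos hdesc hprod).ne', ?_⟩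
  have h1 := factorial_two_mul_add_mul_factorial m j
  have h2 := Nat.factorial_mul_descFactorial hjm
  rw [Int.cast_natCast, Nat.cast_mul, Nat.cast_choose ℚ (show m - j ≤ 2 * m by omega),
    Nat.cast_choose ℚ (show 2 * m ≤ 2 * m + 2 * j by omega),
    Nat.cast_choose ℚ (show m ≤ 2 * m by omega),
    show 2 * m - (m - j) = m + j by omega, show 2 * m + 2 * j - 2 * m = 2 * j by omega,
    show 2 * m - m = m by omega]
  generalize (∏ i ∈ Finset.range j, 2 * (2 * (m + i) + 1)) = P at h1 ⊢
  have h1' : ((2 * m + 2 * j).factorial : ℚ) * m.factorial =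
      (m + j).factorial * (2 * m).factorial * P := by exact_mod_cast h1
  have h2' : ((m - j).factorial : ℚ) * m.descFactorial j = m.factorial := by exact_mod_cast h2
  have e1 : ((m - j).factorial : ℚ) ≠ 0 := by positivity
  have e2 : ((m + j).factorial : ℚ) ≠ 0 := by positivity
  have e3 : ((2 * m).factorial : ℚ) ≠ 0 := by positivity
  have e4 : ((2 * j).factorial : ℚ) ≠ 0 := by positivity
  have e5 : (m.factorial : ℚ) ≠ 0 := by positivity
  field_simp
  linear_combination (m.factorial : ℚ) * h1' - (m + j).factorial * (2 * m).factorial * P * h2'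
end

section
/- For all integers m ≥ 1 and 1 ≤ j ≤ m, the rational number C(2m+1, m−j)·C(2m+2j+2, 2m+1)·(2j+1)! / (2·(2m+1)·C(2m, m)) is a (nonzero) integer, where C(a,b) denotes the binomial coefficient. -/
/-!
Writing the binomial coefficients as factorials and cancelling, the quotient becomes
`m! / (m - j)!` times `(2m + 2j + 1)! m! / ((m + j)! (2m + 1)!)`. The first factor is the falling
factorial `m.descFactorial j`. In the second, the even factors of `(2m + 2j + 1)! / (2m + 1)!` are
the doubles of the factors of `(m + j)! / m!`, so what remains is `∏ i < j, 2 (2m + 2i + 3)`.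
The quotient is therefore a product of positive integers.
-/

/-- Cancelling `(m + j)! / m!` from the even factors of `(2m + 2j + 1)! / (2m + 1)!` leaves one
factor `2` and one odd factor for each `i < j`. -/
lemma factorial_mul_factorial_eq_prod (m j : ℕ) :
    (2 * m + 2 * j + 1).factorial * m.factorial =
      (m + j).factorial * (2 * m + 1).factorial *
        ∏ i ∈ Finset.range j, (2 * (2 * m + 2 * i + 3)) := by
  induction j with
  | zero => simp [mul_comm]
  | succ j ih =>
    rw [Finset.prod_range_succ,
      show 2 * m + 2 * (j + 1) + 1 = (2 * m + 2 * j + 1) + 1 + 1 by ring,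
      Nat.factorial_succ, Nat.factorial_succ, ← add_assoc m j 1, Nat.factorial_succ (m + j)]
    linear_combination (2 * m + 2 * j + 3) * (2 * m + 2 * j + 2) * ih

theorem stmt19 (m j : ℕ) (hm : 1 ≤ m) (hj1 : 1 ≤ j) (hjm : j ≤ m) :
    ∃ b : ℤ, b ≠ 0 ∧
      (((2 * m + 1).choose (m - j) : ℚ) * ((2 * m + 2 * j + 2).choose (2 * m + 1) : ℚ)
          * ((2 * j + 1).factorial : ℚ))
        / (2 * (2 * m + 1 : ℚ) * ((2 * m).choose m : ℚ)) = (b : ℚ) := by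
  have hprod : 0 < ∏ i ∈ Finset.range j, (2 * (2 * m + 2 * i + 3)) :=
    Finset.prod_pos fun i _ => by positivity
  have hdesc : 0 < m.descFactorial j := Nat.descFactorial_pos.mpr hjm
  have key := factorial_mul_factorial_eq_prod m j
  have hd := Nat.factorial_mul_descFactorial hjm
  generalize (∏ i ∈ Finset.range j, (2 * (2 * m + 2 * i + 3))) = P at hprod key
  generalize m.descFactorial j = D at hdesc hd
  refine ⟨((D * P : ℕ) : ℤ), by exact_mod_cast (Nat.mul_pos hdesc hprod).ne', ?_⟩
  have c1 := Nat.choose_mul_factorial_mul_factorial (show m - j ≤ 2 * m + 1 by omega)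
  have c2 := Nat.choose_mul_factorial_mul_factorial
    (show 2 * m + 1 ≤ 2 * m + 2 * j + 2 by omega)
  have c3 := Nat.choose_mul_factorial_mul_factorial (show m ≤ 2 * m by omega)
  rw [show 2 * m + 1 - (m - j) = m + j + 1 by omega, Nat.factorial_succ (m + j)] at c1
  rw [show 2 * m + 2 * j + 2 - (2 * m + 1) = 2 * j + 1 by omega,
    Nat.factorial_succ (2 * m + 2 * j + 1)] at c2
  rw [show 2 * m - m = m by omega] at c3
  have h1 := Nat.factorial_succ (2 * m)
  have hC : 0 < (2 * m).choose m := Nat.choose_pos (by omega)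
  have p1 := Nat.factorial_pos (m - j)
  have p2 := Nat.factorial_pos (m + j)
  have p3 := Nat.factorial_pos m
  have p4 := Nat.factorial_pos (2 * m + 1)
  rw [div_eq_iff (by positivity)]
  norm_cast
  generalize (2 * m + 1).choose (m - j) = A at *
  generalize (2 * m + 2 * j + 2).choose (2 * m + 1) = B at *
  generalize (2 * m).choose m = C at *
  generalize (2 * m + 2 * j + 1).factorial = F at *
  generalize (2 * j + 1).factorial = G at *
  generalize (m - j).factorial = a at *
  generalize (m + j).factorial = b at *
  generalize (2 * m + 1).factorial = N at *
  generalize (2 * m).factorial = M at *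
  generalize m.factorial = f at *
  -- Both sides agree after multiplication by the denominators `(m - j)! (m + j + 1)! (2m + 1)! m!`.
  apply Nat.eq_of_mul_eq_mul_left (show 0 < a * ((m + j + 1) * b) * N * f by positivity)
  calc a * ((m + j + 1) * b) * N * f * (A * B * G)
      = (A * a * ((m + j + 1) * b)) * (B * N * G) * f := by ring
    _ = N * ((2 * m + 2 * j + 2) * (F * f)) := by rw [c1, c2]; ring
    _ = 2 * (m + j + 1) * b * N * P * N := by rw [key]; ring
    _ = 2 * (m + j + 1) * b * N * P * ((2 * m + 1) * (C * f * f)) := by rw [c3, ← h1]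
    _ = 2 * (m + j + 1) * b * N * P * ((2 * m + 1) * (C * f * (a * D))) := by rw [hd]
    _ = a * ((m + j + 1) * b) * N * f * (D * P * (2 * (2 * m + 1) * C)) := by ring
end
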